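/- arXiv:1010.4544 — 3 statements merged into one kernel-verified Lean document; each statement's English description precedes it below -/
import Mathlib

section
/- Let u be a nondegenerate Lucas sequence. Then for every ε with 0 < ε < 1 there is x₀ such that for all x ≥ x₀, the number of positive integers n ≤ x with n ∣ u_n is at most x/L(x)^{1−ε}, where L(x) = exp(√(log x · log log x)). -/
/-!
Let `z(p)` be the rank of apparition of a prime `p` in `u`, so that `p ∣ u n ↔ z(p) ∣ n`. For all
primes beyond some bound `B` it exists, is at most `p + 1`, and is coprime to `p` (`exists_rank`).
Hence if `p > B` divides `n` and `n ∣ u n`, then `p z(p) ∣ n`. Moreover, the primes with `z(p) = k`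
all divide `u k`, which is nonzero by nondegeneracy (`lucas_ne_zero`) and at most exponential in `k`
(`lucas_abs_le`), so there are `O(k)` of them.

The last fact shows that the sum of `1 / (p z(p))` over `p ≥ t` is `O(t ^ (-1/2 + δ))`
(`weight_sum`). On the other hand, Rankin's method (`rankin`) together with the bound `O(log log N)`
for the sum of `1 / p` over `p < N` (`sum_inv_primes_le`) shows that at most
`y L(x) ^ (-1/(2c) + O(δ))` integers up to `y = x / d` are `L(x) ^ c`-smooth, uniformly for `d` at
most a fixed power of `L(x)` (`smooth_count`).

Now sort the `n ≤ x` with `n ∣ u n` by their largest prime factor `p` (`count_bound`). If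
`p ≤ L(x) ^ δ`, then `n` is very smooth and there are few such `n`. If `p` is about `L(x) ^ c`, then
`n = p z(p) m` with `m` an `L(x) ^ c`-smooth integer up to `x / (p z(p))`; summing over `p` gives a
count of `x L(x) ^ (-(c/2 + 1/(2c)) + O(δ))`, and `c/2 + 1/(2c) ≥ 1`. If `p ≥ L(x) ^ 2`, the trivial
bound `x / (p z(p))` summed over `p` already gives `x L(x) ^ (-1 + O(δ))`. Only boundedly many
values of `c`, spaced by `δ`, are needed.
-/

open Classical in
/-- The number of positive integers `n ≤ x` with `n ∣ u n`. -/
noncomputable def countDiv (u : ℕ → ℤ) (x : ℝ) : ℕ :=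
  ((Finset.Icc 1 ⌊x⌋₊).filter fun n : ℕ => (n : ℤ) ∣ u n).card

/-- `L(x) = exp(√(log x · log log x))`. -/
noncomputable def Lfun (x : ℝ) : ℝ :=
  Real.exp (Real.sqrt (Real.log x * Real.log (Real.log x)))

open Real Filter

/-! ### Lucas sequences modulo primes -/

/-- Binet's formula, cleared of denominators so that it holds in any commutative ring. -/
lemma lucas_binet {K : Type*} [CommRing K] (a₁ a₂ : ℤ) (u : ℕ → ℤ)
    (hu0 : u 0 = 0) (hu1 : u 1 = 1)
    (hrec : ∀ n : ℕ, u (n + 2) = a₁ * u (n + 1) + a₂ * u n)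
    (α β : K) (hs : α + β = a₁) (hp : α * β = -a₂) (n : ℕ) :
    (u n : K) * (α - β) = α ^ n - β ^ n := by
  induction n using Nat.twoStepInduction with
  | zero => simp [hu0]
  | one => simp [hu1]
  | more n h1 h2 =>
    rw [hrec]; push_cast
    have e2 : (a₂ : K) = -(α * β) := by rw [hp]; ring
    calc ((a₁ : K) * u (n + 1) + a₂ * u n) * (α - β)
        = a₁ * (u (n + 1) * (α - β)) + a₂ * (u n * (α - β)) := by ring
      _ = (α + β) * (α ^ (n + 1) - β ^ (n + 1)) + (-(α * β)) * (α ^ n - β ^ n) := by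
          rw [h1, h2, ← hs, e2]
      _ = _ := by ring

/-- Roots `α`, `β` of `X² - a₁ X - a₂`, described by Vieta's formulas. -/
lemma exists_roots {K : Type*} [Field K] [IsAlgClosed K] (a₁ a₂ : ℤ) :
    ∃ α β : K, α + β = a₁ ∧ α * β = -a₂ := by
  open Polynomial in
  have hdeg : (X ^ 2 - C (a₁ : K) * X - C (a₂ : K)).degree = 2 := by compute_degree!
  obtain ⟨α, hα⟩ := IsAlgClosed.exists_root _ (by rw [hdeg]; norm_num)
  simp only [Polynomial.IsRoot, Polynomial.eval_sub, Polynomial.eval_pow, Polynomial.eval_X,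
    Polynomial.eval_mul, Polynomial.eval_C] at hα
  exact ⟨α, a₁ - α, by ring, by linear_combination -hα⟩

/-- Nondegeneracy excludes zeros: `u k = 0` would give `(α / β) ^ k = 1`. -/
lemma lucas_ne_zero (a₁ a₂ : ℤ) (u : ℕ → ℤ)
    (ha₂ : a₂ ≠ 0)
    (hu0 : u 0 = 0) (hu1 : u 1 = 1)
    (hrec : ∀ n : ℕ, u (n + 2) = a₁ * u (n + 1) + a₂ * u n)
    (hΔ : a₁ ^ 2 + 4 * a₂ ≠ 0)
    (hnd : ∀ α β : ℂ, α ^ 2 - (a₁ : ℂ) * α - (a₂ : ℂ) = 0 →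
      β ^ 2 - (a₁ : ℂ) * β - (a₂ : ℂ) = 0 → α ≠ β →
      ∀ m : ℕ, 0 < m → (α / β) ^ m ≠ 1) (k : ℕ) (hk : 0 < k) : u k ≠ 0 := by
  intro h0
  obtain ⟨α, β, hs, hp⟩ := exists_roots (K := ℂ) a₁ a₂
  have hb := lucas_binet a₁ a₂ u hu0 hu1 hrec α β hs hp k
  rw [h0, Int.cast_zero, zero_mul] at hb
  have hne : α ≠ β := by
    rintro rfl
    apply hΔ
    have : ((a₁ : ℂ)) ^ 2 + 4 * a₂ = 0 := by rw [← hs]; linear_combination 4 * hp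
    exact_mod_cast this
  have hβ : β ≠ 0 := by
    rintro rfl
    apply ha₂
    have : (a₂ : ℂ) = 0 := by linear_combination hp
    exact_mod_cast this
  refine hnd α β ?_ ?_ hne k hk ?_
  · rw [← hs]; linear_combination -hp
  · rw [← hs]; linear_combination -hp
  · rw [div_pow, div_eq_one_iff_eq (pow_ne_zero _ hβ)]
    exact (sub_eq_zero.mp hb.symm)

/-- The rank of apparition `z` of a prime `p` not dividing `a₂` or the discriminant. It is the order
of `α / β` in an algebraic closure of `𝔽_p`, and it divides `p - 1` or `p + 1`, since
`u (p - 1) * u (p + 1) ≡ 0 (mod p)`; hence it is coprime to `p` and at most `p + 1`. -/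
lemma exists_rank (a₁ a₂ : ℤ) (u : ℕ → ℤ)
    (hu0 : u 0 = 0) (hu1 : u 1 = 1)
    (hrec : ∀ n : ℕ, u (n + 2) = a₁ * u (n + 1) + a₂ * u n)
    (p : ℕ) (hp : p.Prime) (hpa : ¬ (p : ℤ) ∣ a₂) (hpΔ : ¬ (p : ℤ) ∣ a₁ ^ 2 + 4 * a₂) :
    ∃ z : ℕ, 1 ≤ z ∧ z ≤ p + 1 ∧ Nat.Coprime p z ∧ ∀ n : ℕ, (p : ℤ) ∣ u n ↔ z ∣ n := by
  have : Fact p.Prime := ⟨hp⟩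
  obtain ⟨K, _, _, _⟩ : ∃ (K : Type) (_ : Field K) (_ : Algebra (ZMod p) K), IsAlgClosed K :=
    ⟨AlgebraicClosure (ZMod p), inferInstance, inferInstance, inferInstance⟩
  obtain ⟨α, β, hs, hpr⟩ := exists_roots (K := K) a₁ a₂
  have : CharP K p := charP_of_injective_algebraMap (algebraMap (ZMod p) K).injective p
  have hcast : ∀ m : ℤ, (m : K) = 0 ↔ (p : ℤ) ∣ m := fun m => CharP.intCast_eq_zero_iff K p m
  have hb := lucas_binet a₁ a₂ u hu0 hu1 hrec α β hs hpr
  have ha2 : (a₂ : K) ≠ 0 := fun h => hpa ((hcast _).1 h)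
  have hD : (α - β) ^ 2 = ((a₁ ^ 2 + 4 * a₂ : ℤ) : K) := by
    push_cast; rw [← hs]; linear_combination -4 * hpr
  have hD0 : ((a₁ ^ 2 + 4 * a₂ : ℤ) : K) ≠ 0 := fun h => hpΔ ((hcast _).1 h)
  have hne : α - β ≠ 0 := by
    intro h; rw [h] at hD; apply hD0; rw [← hD]; ring
  have hβ : β ≠ 0 := by
    rintro rfl; apply ha2; linear_combination hpr
  have hiff : ∀ n : ℕ, (p : ℤ) ∣ u n ↔ orderOf (α / β) ∣ n := by
    intro n
    rw [← hcast, orderOf_dvd_iff_pow_eq_one, div_pow, div_eq_one_iff_eq (pow_ne_zero _ hβ),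
      ← sub_eq_zero (a := α ^ n), ← hb n, mul_eq_zero, or_iff_left hne]
  -- Fermat's little theorem for integers in `K`
  have hfermat : ∀ m : ℤ, (m : K) ≠ 0 → (m : K) ^ (p - 1) = 1 := by
    intro m hm
    have h1 : (m : ZMod p) ≠ 0 := by
      intro h
      apply hm
      rw [hcast]; exact (ZMod.intCast_zmod_eq_zero_iff_dvd m p).1 h
    have := congrArg (algebraMap (ZMod p) K) (ZMod.pow_card_sub_one_eq_one h1)
    simpa using this
  -- Frobenius gives `u p = (α - β) ^ (p - 1)`
  have hup : (u p : K) = (α - β) ^ (p - 1) := by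
    apply mul_right_cancel₀ hne
    rw [hb p, ← pow_succ, Nat.sub_add_cancel hp.one_le, sub_pow_char]
  have hup2 : (u p : K) ^ 2 = 1 := by
    rw [hup, ← pow_mul, mul_comm, pow_mul, hD, hfermat _ hD0]
  have hq : (α * β) ^ (p - 1) = 1 := by
    have := hfermat (-a₂) (by push_cast; exact neg_ne_zero.2 ha2)
    rw [hpr]; push_cast at this; exact this
  -- Cassini: `u (p - 1) * u (p + 1) = (u p) ^ 2 - (α β) ^ (p - 1)`, which is `1 - 1`
  have hcas : (u (p - 1) : K) * u (p + 1) = 0 := by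
    have h1 := hb (p - 1)
    have h2 := hb (p + 1)
    have h3 := hb p
    obtain ⟨q, rfl⟩ : ∃ q, p = q + 1 := ⟨p - 1, by have := hp.one_le; omega⟩
    simp only [Nat.add_sub_cancel] at *
    have : ((u q : K) * u (q + 1 + 1)) * (α - β) ^ 2 =
        ((u (q + 1) : K) ^ 2 - (α * β) ^ q) * (α - β) ^ 2 := by
      calc _ = ((u q : K) * (α - β)) * (u (q + 1 + 1) * (α - β)) := by ring
        _ = ((u (q + 1) : K) * (α - β)) ^ 2 - (α * β) ^ q * (α - β) ^ 2 := by
            rw [h1, h2, h3, mul_pow]; ring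
        _ = _ := by ring
    have := mul_right_cancel₀ (pow_ne_zero 2 hne) this
    rw [this, hup2, hq, sub_self]
  have hp2 := hp.two_le
  have hz : orderOf (α / β) ∣ p - 1 ∨ orderOf (α / β) ∣ p + 1 := by
    rcases mul_eq_zero.1 hcas with h | h
    · left; rw [← hiff, ← hcast]; exact h
    · right; rw [← hiff, ← hcast]; exact h
  refine ⟨orderOf (α / β), ?_, ?_, ?_, hiff⟩
  · rcases hz with h | h
    · exact Nat.pos_of_dvd_of_pos h (by omega)
    · exact Nat.pos_of_dvd_of_pos h (by omega)
  · rcases hz with h | h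
    · have := Nat.le_of_dvd (by omega) h; omega
    · exact Nat.le_of_dvd (by omega) h
  · rw [hp.coprime_iff_not_dvd]
    intro hd
    rcases hz with h | h
    · have := Nat.le_of_dvd (by omega) (hd.trans h); omega
    · have := (Nat.dvd_add_right (dvd_refl p)).1 (hd.trans h)
      have := Nat.le_of_dvd (by omega) this; omega

lemma lucas_abs_le (a₁ a₂ : ℤ) (u : ℕ → ℤ) (hu0 : u 0 = 0) (hu1 : u 1 = 1)
    (hrec : ∀ n : ℕ, u (n + 2) = a₁ * u (n + 1) + a₂ * u n) (n : ℕ) :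
    (u n).natAbs ≤ 2 ^ ((a₁.natAbs + a₂.natAbs) * n) := by
  have hA : a₁.natAbs + a₂.natAbs ≤ 2 ^ (a₁.natAbs + a₂.natAbs) := Nat.lt_two_pow_self.le
  rw [pow_mul]
  have hA1 : 1 ≤ 2 ^ (a₁.natAbs + a₂.natAbs) := Nat.one_le_two_pow
  set A := 2 ^ (a₁.natAbs + a₂.natAbs)
  induction n using Nat.twoStepInduction with
  | zero => simp [hu0]
  | one => simpa [hu1] using hA1
  | more n h1 h2 =>
    rw [hrec]
    calc _ ≤ (a₁ * u (n + 1)).natAbs + (a₂ * u n).natAbs := Int.natAbs_add_le _ _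
      _ = a₁.natAbs * (u (n + 1)).natAbs + a₂.natAbs * (u n).natAbs := by
          rw [Int.natAbs_mul, Int.natAbs_mul]
      _ ≤ a₁.natAbs * A ^ (n + 1) + a₂.natAbs * A ^ (n + 1) := by
          gcongr
          exact h1.trans (Nat.pow_le_pow_right hA1 (by omega))
      _ = (a₁.natAbs + a₂.natAbs) * A ^ (n + 1) := by ring
      _ ≤ A * A ^ (n + 1) := by gcongr
      _ = A ^ (n + 2) := by ring

/-- A positive integer `m ≤ 2 ^ b` has at most `b` prime divisors. -/
lemma card_primes_le (S : Finset ℕ) (m b : ℕ) (hm : 0 < m) (hS : ∀ p ∈ S, p.Prime ∧ p ∣ m)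
    (hb : m ≤ 2 ^ b) : S.card ≤ b := by
  have h1 : 2 ^ S.card ≤ ∏ p ∈ S, p :=
    Finset.pow_card_le_prod S _ _ fun p hp => (hS p hp).1.two_le
  have h2 : ∏ p ∈ S, p ∣ m :=
    Finset.prod_primes_dvd m (fun p hp => (hS p hp).1.prime) fun p hp => (hS p hp).2
  exact (Nat.pow_le_pow_iff_right (by norm_num)).1 ((h1.trans (Nat.le_of_dvd hm h2)).trans hb)

/-! ### Reciprocal sums over primes and Rankin's bound -/

/-- The primes in `[2 ^ j, 2 ^ (j + 1))` multiply to at most `4 ^ (2 ^ (j + 1))`, by the primorial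
bound, so there are at most `4 * 2 ^ j / j` of them and their reciprocals contribute at most
`4 / j`. -/
lemma sum_inv_primes_dyadic (J : ℕ) :
    ∑ p ∈ Nat.primesBelow (2 ^ (J + 1)), (p : ℝ)⁻¹ ≤ 4 * (harmonic J : ℝ) := by
  induction J with
  | zero =>
    rw [show Nat.primesBelow (2 ^ (0 + 1)) = ∅ by decide]
    simp
  | succ J ih =>
    set S := (Finset.Ico (2 ^ (J + 1)) (2 ^ (J + 2))).filter Nat.Prime with hS
    have hsub : Nat.primesBelow (2 ^ (J + 2)) ⊆ Nat.primesBelow (2 ^ (J + 1)) ∪ S := by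
      intro p hp
      rw [Nat.mem_primesBelow] at hp
      simp only [Finset.mem_union, Nat.mem_primesBelow, hS, Finset.mem_filter, Finset.mem_Ico]
      rcases lt_or_ge p (2 ^ (J + 1)) with h | h
      · exact Or.inl ⟨h, hp.2⟩
      · exact Or.inr ⟨⟨h, hp.1⟩, hp.2⟩
    have hcard : (J + 1) * S.card ≤ 2 * 2 ^ (J + 2) := by
      have h1 : (2 ^ (J + 1)) ^ S.card ≤ ∏ p ∈ S, p :=
        Finset.pow_card_le_prod S _ _ fun p hp => by
          simp only [hS, Finset.mem_filter, Finset.mem_Ico] at hp; exact hp.1.1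
      have h2 : ∏ p ∈ S, p ∣ primorial (2 ^ (J + 2)) := by
        apply Finset.prod_dvd_prod_of_subset
        intro p hp
        simp only [hS, Finset.mem_filter, Finset.mem_Ico] at hp
        simp only [Finset.mem_filter, Finset.mem_range]
        exact ⟨by omega, hp.2⟩
      have h3 := (h1.trans (Nat.le_of_dvd (primorial_pos _) h2)).trans (primorial_le_four_pow _)
      rw [← pow_mul, show (4 : ℕ) = 2 ^ 2 by norm_num, ← pow_mul] at h3
      exact (Nat.pow_le_pow_iff_right (by norm_num)).1 h3
    have hsum : ∑ p ∈ S, (p : ℝ)⁻¹ ≤ 4 * ((J + 1 : ℕ) : ℝ)⁻¹ := by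
      calc ∑ p ∈ S, (p : ℝ)⁻¹ ≤ ∑ p ∈ S, ((2 : ℝ) ^ (J + 1))⁻¹ := by
            apply Finset.sum_le_sum
            intro p hp
            simp only [hS, Finset.mem_filter, Finset.mem_Ico] at hp
            apply inv_anti₀ (by positivity)
            exact_mod_cast hp.1.1
        _ = S.card * ((2 : ℝ) ^ (J + 1))⁻¹ := by simp
        _ ≤ _ := by
            rw [← div_eq_mul_inv, ← div_eq_mul_inv, div_le_div_iff₀ (by positivity) (by positivity)]
            have : (((J + 1) * S.card : ℕ) : ℝ) ≤ ((2 * 2 ^ (J + 2) : ℕ) : ℝ) := by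
              exact_mod_cast hcard
            push_cast at this ⊢
            rw [pow_succ 2 (J + 1)] at this
            nlinarith
    calc ∑ p ∈ Nat.primesBelow (2 ^ (J + 1 + 1)), (p : ℝ)⁻¹
        ≤ ∑ p ∈ Nat.primesBelow (2 ^ (J + 1)) ∪ S, (p : ℝ)⁻¹ :=
          Finset.sum_le_sum_of_subset_of_nonneg hsub fun _ _ _ => by positivity
      _ ≤ ∑ p ∈ Nat.primesBelow (2 ^ (J + 1)), (p : ℝ)⁻¹ + ∑ p ∈ S, (p : ℝ)⁻¹ := by
          rw [← Finset.sum_union_inter]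
          exact le_add_of_nonneg_right (Finset.sum_nonneg fun _ _ => by positivity)
      _ ≤ 4 * (harmonic J : ℝ) + 4 * ((J + 1 : ℕ) : ℝ)⁻¹ := add_le_add ih hsum
      _ = _ := by rw [harmonic_succ]; push_cast; ring

/-- A weak form of Mertens' theorem: the sum of `1 / p` over `p < N` is `O(log log N)`. -/
lemma sum_inv_primes_le (N : ℕ) (hN : 2 ≤ N) :
    ∑ p ∈ Nat.primesBelow N, (p : ℝ)⁻¹ ≤ 4 * (1 + log (2 * log N)) := by
  have hJ : N < 2 ^ (Nat.log 2 N + 1) := Nat.lt_pow_succ_log_self (by norm_num) N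
  have hJ1 : 1 ≤ Nat.log 2 N := Nat.log_pos (by norm_num) hN
  have hsub : Nat.primesBelow N ⊆ Nat.primesBelow (2 ^ (Nat.log 2 N + 1)) := by
    intro p hp
    rw [Nat.mem_primesBelow] at hp ⊢
    exact ⟨hp.1.trans hJ, hp.2⟩
  have hlog : (Nat.log 2 N : ℝ) ≤ 2 * log N := by
    have h1 : (2 : ℝ) ^ (Nat.log 2 N) ≤ N := by exact_mod_cast Nat.pow_log_le_self 2 (by omega)
    have h2 := Real.log_le_log (by positivity) h1
    rw [Real.log_pow] at h2
    have := Real.log_two_gt_d9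
    have : (0 : ℝ) ≤ Nat.log 2 N := by positivity
    nlinarith
  calc _ ≤ ∑ p ∈ Nat.primesBelow (2 ^ (Nat.log 2 N + 1)), (p : ℝ)⁻¹ :=
        Finset.sum_le_sum_of_subset_of_nonneg hsub fun _ _ _ => by positivity
    _ ≤ 4 * (harmonic (Nat.log 2 N) : ℝ) := sum_inv_primes_dyadic _
    _ ≤ 4 * (1 + log (Nat.log 2 N)) := by gcongr; exact harmonic_le_one_add_log _
    _ ≤ _ := by
        gcongr

/-- Rankin's bound for the number of `N`-smooth integers up to `X`: each of them satisfies
`1 ≤ (X / m) ^ (1 - η)`, and the sum of `m ^ (-(1 - η))` over all `N`-smooth `m` is an Euler product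
over the primes below `N`. -/
lemma rankin (X η : ℝ) (N : ℕ) (hη0 : 0 ≤ η) (hη : η ≤ 1 / 2) (hX : 0 < X) :
    ((Nat.smoothNumbersUpTo ⌊X⌋₊ N).card : ℝ) ≤
      X ^ (1 - η) * exp (4 * ((N : ℝ) ^ η * ∑ p ∈ Nat.primesBelow N, (p : ℝ)⁻¹)) := by
  let f : ℕ →* ℝ :=
    { toFun := fun n => (n : ℝ) ^ (-(1 - η))
      map_one' := by simp
      map_mul' := fun a b => by
        push_cast; rw [Real.mul_rpow (by positivity) (by positivity)] }
  have hf : ∀ n : ℕ, f n = (n : ℝ) ^ (-(1 - η)) := fun n => rfl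
  have hf0 : ∀ n : ℕ, 0 ≤ f n := fun n => by rw [hf]; positivity
  -- `2 ^ (-1 / 2) ≤ 3 / 4` keeps the Euler factors bounded
  have hsmall : ∀ p : ℕ, p.Prime → f p ≤ 3 / 4 := by
    intro p hp
    rw [hf]
    have hp2 : (2 : ℝ) ≤ p := by exact_mod_cast hp.two_le
    calc (p : ℝ) ^ (-(1 - η)) ≤ (2 : ℝ) ^ (-(1 - η)) :=
          Real.rpow_le_rpow_of_nonpos (by norm_num) hp2 (by linarith)
      _ ≤ (2 : ℝ) ^ (-(1 / 2 : ℝ)) :=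
          Real.rpow_le_rpow_of_exponent_le (by norm_num) (by linarith)
      _ ≤ 3 / 4 := by
          rw [Real.rpow_neg (by norm_num), ← Real.sqrt_eq_rpow]
          rw [inv_le_comm₀ (by positivity) (by norm_num)]
          apply Real.le_sqrt_of_sq_le; norm_num
  have hE := EulerProduct.summable_and_hasSum_smoothNumbers_prod_primesBelow_geometric (f := f)
    (fun {p} hp => by
      rw [Real.norm_of_nonneg (hf0 p)]; linarith [hsmall p hp]) N
  have hsumle : ∑ m ∈ Nat.smoothNumbersUpTo ⌊X⌋₊ N, f m ≤ ∏ p ∈ N.primesBelow, (1 - f p)⁻¹ := by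
    have hmem : ∀ m ∈ Nat.smoothNumbersUpTo ⌊X⌋₊ N, m ∈ Nat.smoothNumbers N := fun m hm =>
      (Nat.mem_smoothNumbersUpTo.1 hm).2
    rw [← Finset.sum_subtype_of_mem f hmem]
    exact sum_le_hasSum _ (fun i _ => hf0 i) hE.2
  have hprod : ∏ p ∈ N.primesBelow, (1 - f p)⁻¹ ≤
      exp (4 * ((N : ℝ) ^ η * ∑ p ∈ Nat.primesBelow N, (p : ℝ)⁻¹)) := by
    rw [Finset.mul_sum, Finset.mul_sum, Real.exp_sum]
    apply Finset.prod_le_prod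
    · intro p hp
      have := hsmall p (Nat.prime_of_mem_primesBelow hp)
      exact inv_nonneg.2 (by linarith)
    · intro p hp
      have hpp := Nat.prime_of_mem_primesBelow hp
      have h1 := hsmall p hpp
      have hp0 : (0 : ℝ) < p := by exact_mod_cast hpp.pos
      have hfp : f p ≤ (N : ℝ) ^ η * (p : ℝ)⁻¹ := by
        rw [hf, show -(1 - η) = η + (-1) by ring, Real.rpow_add hp0, Real.rpow_neg_one]
        gcongr
        exact_mod_cast (Nat.lt_of_mem_primesBelow hp).le
      calc (1 - f p)⁻¹ ≤ exp (4 * f p) := by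
            rw [inv_le_comm₀ (by linarith) (Real.exp_pos _), ← Real.exp_neg]
            have h0 := hf0 p
            -- `exp (-4 v) ≤ 1 / (1 + 4 v) ≤ 1 - v` for `0 ≤ v ≤ 3 / 4`
            have h2 : 1 + 4 * f p ≤ exp (4 * f p) := by
              linarith [Real.add_one_le_exp (4 * f p)]
            rw [Real.exp_neg, inv_le_comm₀ (Real.exp_pos _) (by linarith)]
            refine le_trans ?_ h2
            rw [inv_le_iff_one_le_mul₀ (by linarith)]
            nlinarith
        _ ≤ _ := by gcongr
  calc ((Nat.smoothNumbersUpTo ⌊X⌋₊ N).card : ℝ)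
      = ∑ m ∈ Nat.smoothNumbersUpTo ⌊X⌋₊ N, (1 : ℝ) := by simp
    _ ≤ ∑ m ∈ Nat.smoothNumbersUpTo ⌊X⌋₊ N, X ^ (1 - η) * f m := by
        apply Finset.sum_le_sum
        intro m hm
        obtain ⟨hm1, hm2⟩ := Nat.mem_smoothNumbersUpTo.1 hm
        have hm0 : (0 : ℝ) < m := by
          exact_mod_cast Nat.pos_of_ne_zero (Nat.ne_zero_of_mem_smoothNumbers hm2)
        have hmX : (m : ℝ) ≤ X := (Nat.le_floor_iff hX.le).1 hm1
        rw [hf, Real.rpow_neg hm0.le, ← div_eq_mul_inv, one_le_div (by positivity)]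
        exact Real.rpow_le_rpow hm0.le hmX (by linarith)
    _ = X ^ (1 - η) * ∑ m ∈ Nat.smoothNumbersUpTo ⌊X⌋₊ N, f m := by rw [Finset.mul_sum]
    _ ≤ _ := by gcongr; exact hsumle.trans hprod

/-! ### Smooth numbers with bound a power of `L(x)` -/

/-- The exponent `√(log x · log log x)`, so that `Lfun x = exp (logL x)`. -/
noncomputable def logL (x : ℝ) : ℝ := √(log x * log (log x))

lemma sqrt_log_le_logL : ∀ᶠ x : ℝ in atTop, √(log x) ≤ logL x := by
  have h := (tendsto_log_atTop.comp tendsto_log_atTop).eventually_ge_atTop (1 : ℝ)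
  filter_upwards [h, tendsto_log_atTop.eventually_ge_atTop (1 : ℝ)] with x h1 h2
  apply Real.sqrt_le_sqrt
  simp only [Function.comp] at h1
  nlinarith

lemma tendsto_logL : Tendsto logL atTop atTop :=
  tendsto_atTop_mono' _ sqrt_log_le_logL (Real.tendsto_sqrt_atTop.comp tendsto_log_atTop)

lemma eventually_log_le_sqrt (b : ℝ) (hb : 0 < b) :
    ∀ᶠ l : ℝ in atTop, log l ≤ b * √l := by
  have h := (isLittleO_log_rpow_atTop (r := 1 / 2) (by norm_num)).bound hb
  filter_upwards [h, eventually_ge_atTop 1] with l hl h1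
  rw [Real.norm_of_nonneg (log_nonneg h1), ← Real.sqrt_eq_rpow,
    Real.norm_of_nonneg (Real.sqrt_nonneg _)] at hl
  exact hl

/-- The number of `L(x) ^ c`-smooth integers up to `x / d` is at most
`(x / d) L(x) ^ (-1 / (2 c) + O(δ))`, uniformly for `d ≤ L(x) ^ K`. -/
lemma smooth_count (c δ K : ℝ) (hc : 0 < c) (hδ : 0 < δ) (hδ1 : δ < 1) (hK : 0 < K) :
    ∀ᶠ x : ℝ in atTop, ∀ d : ℕ, 1 ≤ d → (d : ℝ) ≤ exp (logL x * K) →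
      ((Nat.smoothNumbersUpTo ⌊x / d⌋₊ (⌊exp (logL x * c)⌋₊ + 1)).card : ℝ) ≤
        x / d * exp (logL x * (-((1 - δ) / (2 * c)) + 2 * δ)) := by
  have hpoly : ∀ᶠ l : ℝ in atTop, 2 * (c * l + 1) ≤ l ^ 2 := by
    filter_upwards [eventually_ge_atTop (2 * c + 2)] with l hl
    nlinarith
  have hlogpow : ∀ᶠ l : ℝ in atTop, log l ≤ δ / 96 * l ^ (δ / 2) := by
    have h := (isLittleO_log_rpow_atTop (r := δ / 2) (by positivity)).bound
      (show 0 < δ / 96 by positivity)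
    filter_upwards [h, eventually_ge_atTop 1] with l hl h1
    rw [Real.norm_of_nonneg (log_nonneg h1), Real.norm_of_nonneg (by positivity)] at hl
    exact hl
  have hev := (eventually_log_le_sqrt c hc).and <|
    (eventually_log_le_sqrt 1 one_pos).and <|
    (eventually_log_le_sqrt (δ * (2 * c) / K) (by positivity)).and <| hpoly.and <| hlogpow.and <|
    (tendsto_log_atTop.eventually_ge_atTop 1).and (eventually_ge_atTop 1)
  filter_upwards [tendsto_log_atTop.eventually hev, sqrt_log_le_logL, eventually_gt_atTop 0,
    tendsto_logL.eventually_ge_atTop 1] with x hx hsq hx0 hQ1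
  obtain ⟨h1, h2, h3, h4, h5, h6, h7⟩ := hx
  intro d hd hdK
  have hQ2 : logL x ^ 2 = log x * log (log x) := Real.sq_sqrt (by positivity)
  set Q := logL x with hQ
  set l := log x with hl
  set m := log l with hm
  have hl0 : 0 < l := by linarith
  have hd0 : (0 : ℝ) < d := by exact_mod_cast hd
  have hsl : 0 < √l := Real.sqrt_pos.2 hl0
  have hss : √l * √l = l := Real.mul_self_sqrt hl0.le
  have hQl : Q ≤ l := by
    have : m ≤ l := Real.log_le_self hl0.le
    nlinarith
  -- the Rankin shift: `x ^ η = L ^ ((1 - δ) / (2 c))` and `L ^ (c η) = (log x) ^ ((1 - δ) / 2)`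
  set η := (1 - δ) / (2 * c) * (m / Q) with hη
  have hQ0 : 0 < Q := by linarith
  have hηnn : 0 ≤ η := by
    have : 0 ≤ 1 - δ := by linarith
    positivity
  have hηl : η * l = (1 - δ) / (2 * c) * Q := by
    rw [hη]; field_simp; rw [hQ2]; ring
  have hηQ : η * Q = (1 - δ) / (2 * c) * m := by
    rw [hη]; field_simp
  have hηhalf : η ≤ 1 / 2 := by
    have : η * Q ≤ 1 / 2 * Q := by
      rw [hηQ, div_mul_eq_mul_div, div_le_iff₀ (by positivity)]
      nlinarith
    exact le_of_mul_le_mul_right this hQ0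
  set N := ⌊exp (Q * c)⌋₊ + 1 with hN
  have he1 : 1 ≤ exp (Q * c) := Real.one_le_exp (by positivity)
  have hN2 : 2 ≤ N := by
    have : 1 ≤ ⌊exp (Q * c)⌋₊ := Nat.one_le_floor_iff _ |>.2 he1
    omega
  have hNle : (N : ℝ) ≤ 2 * exp (Q * c) := by
    have := Nat.floor_le (Real.exp_pos (Q * c)).le
    rw [hN]; push_cast; linarith
  have hlogN : log N ≤ c * l + 1 := by
    calc log N ≤ log (2 * exp (Q * c)) := Real.log_le_log (by positivity) hNle
      _ = log 2 + Q * c := by rw [Real.log_mul (by norm_num) (Real.exp_ne_zero _), Real.log_exp]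
      _ ≤ _ := by nlinarith [Real.log_two_lt_d9]
  have hS : ∑ p ∈ Nat.primesBelow N, (p : ℝ)⁻¹ ≤ 12 * m := by
    have hpos : 0 < log N := Real.log_pos (by exact_mod_cast hN2)
    calc _ ≤ 4 * (1 + log (2 * log N)) := sum_inv_primes_le N hN2
      _ ≤ 4 * (1 + log (l ^ 2)) := by gcongr; linarith
      _ = 4 * (1 + 2 * m) := by rw [Real.log_pow]; push_cast; ring
      _ ≤ _ := by linarith
  have hNη : (N : ℝ) ^ η ≤ 2 * l ^ ((1 - δ) / 2) := by
    calc (N : ℝ) ^ η ≤ (2 * exp (Q * c)) ^ η := Real.rpow_le_rpow (by positivity) hNle hηnn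
      _ = 2 ^ η * exp (Q * c * η) := by
          rw [Real.mul_rpow (by norm_num) (Real.exp_pos _).le, Real.exp_mul (Q * c)]
      _ ≤ 2 * exp (Q * c * η) := by
          gcongr
          calc (2 : ℝ) ^ η ≤ 2 ^ (1 : ℝ) :=
                Real.rpow_le_rpow_of_exponent_le (by norm_num) (by linarith)
            _ = 2 := by simp
      _ = _ := by
          rw [Real.rpow_def_of_pos hl0]
          congr 2
          rw [show Q * c * η = c * (η * Q) by ring, hηQ]; field_simp; rw [← hm]
  have hA : 4 * ((N : ℝ) ^ η * ∑ p ∈ Nat.primesBelow N, (p : ℝ)⁻¹) ≤ Q * δ := by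
    calc _ ≤ 4 * ((2 * l ^ ((1 - δ) / 2)) * (12 * (δ / 96 * l ^ (δ / 2)))) := by
          gcongr
          linarith
      _ = δ * (l ^ ((1 - δ) / 2) * l ^ (δ / 2)) := by ring
      _ = δ * √l := by
          rw [← Real.rpow_add hl0, Real.sqrt_eq_rpow]; congr 2; ring
      _ ≤ Q * δ := by nlinarith
  have hdη : (d : ℝ) ^ η ≤ exp (Q * δ) := by
    calc (d : ℝ) ^ η ≤ exp (Q * K) ^ η := Real.rpow_le_rpow hd0.le hdK hηnn
      _ = exp (Q * K * η) := by rw [Real.exp_mul (Q * K)]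
      _ ≤ _ := by
          apply Real.exp_le_exp.2
          rw [show Q * K * η = K * (η * Q) by ring, hηQ]
          have h3' : m * K ≤ δ * (2 * c) * √l := by
            rw [div_mul_eq_mul_div, le_div_iff₀ hK] at h3; exact h3
          rw [show K * ((1 - δ) / (2 * c) * m) = (1 - δ) * (m * K) / (2 * c) by ring,
            div_le_iff₀ (by positivity)]
          have : (1 - δ) * (m * K) ≤ 1 * (m * K) := by
            apply mul_le_mul_of_nonneg_right (by linarith) (by positivity)
          have h8 : δ * (2 * c) * √l ≤ δ * (2 * c) * Q := by gcongr
          linarith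
  have hX : 0 < x / d := by positivity
  calc _ ≤ (x / d) ^ (1 - η) * exp (4 * ((N : ℝ) ^ η * ∑ p ∈ Nat.primesBelow N, (p : ℝ)⁻¹)) :=
        rankin _ _ _ hηnn hηhalf hX
    _ ≤ (x / d) ^ (1 - η) * exp (Q * δ) := by gcongr
    _ = x / d * (exp (-(η * l)) * (d : ℝ) ^ η) * exp (Q * δ) := by
        congr 1
        rw [sub_eq_add_neg, Real.rpow_add hX, Real.rpow_one]
        congr 1
        rw [Real.rpow_neg hX.le, Real.div_rpow hx0.le hd0.le, inv_div, Real.exp_neg,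
          Real.rpow_def_of_pos hx0]
        field_simp
        rw [← hl, mul_comm η l]
    _ ≤ x / d * (exp (-(η * l)) * exp (Q * δ)) * exp (Q * δ) := by gcongr
    _ = _ := by
        rw [mul_assoc, ← Real.exp_add, ← Real.exp_add, hηl]
        congr 2; ring

/-! ### The sum of `1 / (p z(p))` over large primes -/

/-- If `z` takes each value `k` at `O(k)` primes, then the sum of `1 / (p z(p))` over primes `p ≥ t`
is `O(t ^ (-(1 / 2 - δ)))`. Primes with `p ≤ z(p) ^ 2` contribute at most `p ^ (-3 / 2)` each; for
the others a factor `p ^ (-(1 / 2 + δ)) ≤ z(p) ^ (-(1 + 2 δ))` is traded, and the resulting sum of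
`z(p) ^ (-(2 + 2 δ))` converges on grouping by the value of `z`. -/
lemma weight_sum (z : ℕ → ℕ) (B : ℕ) (C δ : ℝ) (hδ : 0 < δ) (hδ1 : δ < 1 / 2)
    (hz : ∀ p : ℕ, p.Prime → B < p → 1 ≤ z p)
    (hcard : ∀ k : ℕ, 1 ≤ k → ∀ S : Finset ℕ, (∀ p ∈ S, p.Prime ∧ B < p ∧ z p = k) →
      (S.card : ℝ) ≤ C * k) :
    ∃ M : ℝ, 0 ≤ M ∧ ∀ t : ℝ, 0 < t → ∀ S : Finset ℕ,
      (∀ p ∈ S, p.Prime ∧ B < p ∧ t ≤ p) →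
      ∑ p ∈ S, (1 : ℝ) / ((p * z p : ℕ) : ℝ) ≤ M * t ^ (-(1 / 2 - δ)) := by
  have hC : 0 ≤ C := by
    have := hcard 1 le_rfl ∅ (by simp)
    simpa using this
  have hs1 : Summable fun n : ℕ => (n : ℝ) ^ (-(1 + δ)) :=
    Real.summable_nat_rpow.2 (by linarith)
  have hs2 : Summable fun n : ℕ => (n : ℝ) ^ (-(1 + 2 * δ)) :=
    Real.summable_nat_rpow.2 (by linarith)
  refine ⟨∑' n : ℕ, (n : ℝ) ^ (-(1 + δ)) + C * ∑' n : ℕ, (n : ℝ) ^ (-(1 + 2 * δ)), ?_, ?_⟩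
  · exact add_nonneg (tsum_nonneg fun _ => by positivity)
      (mul_nonneg hC (tsum_nonneg fun _ => by positivity))
  intro t ht S hS
  have hterm : ∀ p ∈ S, (1 : ℝ) / ((p * z p : ℕ) : ℝ) ≤
      t ^ (-(1 / 2 - δ)) * ((p : ℝ) ^ (-(1 + δ)) + (z p : ℝ) ^ (-(2 + 2 * δ))) := by
    intro p hp
    obtain ⟨hpp, hpB, hpt⟩ := hS p hp
    have hp0 : (0 : ℝ) < p := by exact_mod_cast hpp.pos
    have hz0 : (0 : ℝ) < z p := by exact_mod_cast hz p hpp hpB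
    have htp : (p : ℝ) ^ (-(1 / 2 - δ)) ≤ t ^ (-(1 / 2 - δ)) :=
      Real.rpow_le_rpow_of_nonpos ht hpt (by linarith)
    push_cast
    rw [one_div, mul_inv, mul_add]
    rcases le_total ((p : ℝ)) ((z p : ℝ) ^ 2) with h | h
    · have hle : ((z p : ℝ))⁻¹ ≤ (p : ℝ) ^ (-(1 / 2) : ℝ) := by
        rw [Real.rpow_neg hp0.le, ← Real.sqrt_eq_rpow]
        apply inv_anti₀ (Real.sqrt_pos.2 hp0)
        exact Real.sqrt_le_iff.2 ⟨hz0.le, h⟩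
      calc (p : ℝ)⁻¹ * (z p : ℝ)⁻¹ ≤ (p : ℝ)⁻¹ * (p : ℝ) ^ (-(1 / 2) : ℝ) := by gcongr
        _ = (p : ℝ) ^ (-(1 / 2 - δ)) * (p : ℝ) ^ (-(1 + δ)) := by
            rw [← Real.rpow_neg_one, ← Real.rpow_add hp0, ← Real.rpow_add hp0]; congr 1; ring
        _ ≤ t ^ (-(1 / 2 - δ)) * (p : ℝ) ^ (-(1 + δ)) := by gcongr
        _ ≤ _ := le_add_of_nonneg_right (by positivity)
    · have hle : (p : ℝ) ^ (-(1 / 2 + δ)) ≤ (z p : ℝ) ^ (-(1 + 2 * δ)) := by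
        calc (p : ℝ) ^ (-(1 / 2 + δ)) ≤ ((z p : ℝ) ^ 2) ^ (-(1 / 2 + δ)) :=
              Real.rpow_le_rpow_of_nonpos (by positivity) h (by linarith)
          _ = _ := by
              rw [← Real.rpow_natCast, ← Real.rpow_mul hz0.le]; congr 1; push_cast; ring
      calc (p : ℝ)⁻¹ * (z p : ℝ)⁻¹
          = (p : ℝ) ^ (-(1 / 2 - δ)) * (p : ℝ) ^ (-(1 / 2 + δ)) * (z p : ℝ)⁻¹ := by
            rw [← Real.rpow_add hp0, ← Real.rpow_neg_one (p : ℝ)]; congr 2; ring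
        _ ≤ t ^ (-(1 / 2 - δ)) * (z p : ℝ) ^ (-(1 + 2 * δ)) * (z p : ℝ)⁻¹ := by gcongr
        _ = t ^ (-(1 / 2 - δ)) * (z p : ℝ) ^ (-(2 + 2 * δ)) := by
            rw [mul_assoc, ← Real.rpow_neg_one (z p : ℝ), ← Real.rpow_add hz0]; congr 2; ring
        _ ≤ _ := le_add_of_nonneg_left (by positivity)
  have hb1 : ∑ p ∈ S, (p : ℝ) ^ (-(1 + δ)) ≤ ∑' n : ℕ, (n : ℝ) ^ (-(1 + δ)) :=
    hs1.sum_le_tsum S fun _ _ => by positivity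
  have hb2 : ∑ p ∈ S, (z p : ℝ) ^ (-(2 + 2 * δ)) ≤
      C * ∑' n : ℕ, (n : ℝ) ^ (-(1 + 2 * δ)) := by
    -- group the primes by the value of `z`
    rw [← Finset.sum_fiberwise_of_maps_to (t := S.image z) (g := z)
      fun p hp => Finset.mem_image_of_mem z hp]
    calc _ ≤ ∑ k ∈ S.image z, C * (k : ℝ) ^ (-(1 + 2 * δ)) := by
          apply Finset.sum_le_sum
          intro k hk
          obtain ⟨q, hq, rfl⟩ := Finset.mem_image.1 hk
          have hk1 := hz q (hS q hq).1 (hS q hq).2.1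
          have hk0 : (0 : ℝ) < z q := by exact_mod_cast hk1
          rw [Finset.sum_congr rfl (g := fun _ => (z q : ℝ) ^ (-(2 + 2 * δ))) (by
            intro p hp
            rw [(Finset.mem_filter.1 hp).2]), Finset.sum_const, nsmul_eq_mul]
          calc _ ≤ (C * z q) * (z q : ℝ) ^ (-(2 + 2 * δ)) := by
                gcongr
                apply hcard _ hk1
                intro p hp
                obtain ⟨hp1, hp2⟩ := Finset.mem_filter.1 hp
                exact ⟨(hS p hp1).1, (hS p hp1).2.1, hp2⟩
            _ = _ := by
                rw [mul_assoc]
                nth_rewrite 1 [← Real.rpow_one (z q : ℝ)]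
                rw [← Real.rpow_add hk0]; congr 2; ring
      _ = C * ∑ k ∈ S.image z, (k : ℝ) ^ (-(1 + 2 * δ)) := by rw [Finset.mul_sum]
      _ ≤ _ := by
          gcongr
          exact hs2.sum_le_tsum _ fun _ _ => by positivity
  calc _ ≤ ∑ p ∈ S, t ^ (-(1 / 2 - δ)) * ((p : ℝ) ^ (-(1 + δ)) + (z p : ℝ) ^ (-(2 + 2 * δ))) :=
        Finset.sum_le_sum hterm
    _ = (∑ p ∈ S, (p : ℝ) ^ (-(1 + δ)) + ∑ p ∈ S, (z p : ℝ) ^ (-(2 + 2 * δ)))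
          * t ^ (-(1 / 2 - δ)) := by
        rw [← Finset.mul_sum, Finset.sum_add_distrib, mul_comm]
    _ ≤ _ := by gcongr

/-! ### Counting -/

/-- If every `n` in a set `F` of `N`-smooth numbers up to `x` is a multiple `p z(p) m` with `p ∈ T`,
then each cofactor `m` is an `N`-smooth number up to `x / (p z(p))`. -/
lemma card_le_sum_smooth (z : ℕ → ℕ) (x : ℝ) (hx : 0 ≤ x) (F T : Finset ℕ) (N : ℕ)
    (hFx : ∀ n ∈ F, n ≤ ⌊x⌋₊) (hFN : ∀ n ∈ F, n ∈ Nat.smoothNumbers N)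
    (hT : ∀ p ∈ T, 1 ≤ p * z p)
    (hF : ∀ n ∈ F, ∃ p ∈ T, p * z p ∣ n) :
    (F.card : ℝ) ≤
      ∑ p ∈ T, ((Nat.smoothNumbersUpTo ⌊x / ((p * z p : ℕ) : ℝ)⌋₊ N).card : ℝ) := by
  have hsub : F ⊆ T.biUnion fun p =>
      (Nat.smoothNumbersUpTo ⌊x / ((p * z p : ℕ) : ℝ)⌋₊ N).image fun m => p * z p * m := by
    intro n hn
    obtain ⟨p, hp, m, rfl⟩ := hF n hn
    refine Finset.mem_biUnion.2 ⟨p, hp, Finset.mem_image.2 ⟨m, ?_, rfl⟩⟩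
    refine Nat.mem_smoothNumbersUpTo.2 ⟨?_, Nat.mem_smoothNumbers_of_dvd (hFN _ hn)
      (Dvd.intro_left _ rfl)⟩
    have hd : (0 : ℝ) < ((p * z p : ℕ) : ℝ) := by exact_mod_cast hT p hp
    have := (Nat.le_floor_iff hx).1 (hFx _ hn)
    apply Nat.le_floor
    rw [le_div_iff₀ hd]
    calc (m : ℝ) * ((p * z p : ℕ) : ℝ) = ((p * z p * m : ℕ) : ℝ) := by push_cast; ring
      _ ≤ x := this
  calc (F.card : ℝ) ≤ ((∑ p ∈ T, ((Nat.smoothNumbersUpTo ⌊x / ((p * z p : ℕ) : ℝ)⌋₊ N).image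
          fun m => p * z p * m).card : ℕ) : ℝ) := by
        exact_mod_cast (Finset.card_le_card hsub).trans Finset.card_biUnion_le
    _ ≤ _ := by
        push_cast
        exact Finset.sum_le_sum fun p _ => by exact_mod_cast Finset.card_image_le

lemma exists_prime_ge_of_not_mem_smoothNumbers {n N : ℕ} (h : n ∉ Nat.smoothNumbers N) :
    ∃ p, p.Prime ∧ p ∣ n ∧ N ≤ p := by
  rw [Nat.mem_smoothNumbers'] at h
  push Not at h
  exact h

open Classical in
/-- The counting argument, detached from Lucas sequences: it uses only that membership `n ∈ A` and
`p ∣ n` force `p z(p) ∣ n` for large primes `p`, and that `z` takes the value `k` at `O(k)` primes.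
With `δ = ε / 8`, the elements of `A` up to `x` are sorted by their largest prime factor along the
grid `L(x) ^ ((j + 1) δ)`, `0 ≤ j ≤ J`, whose last exponent lies between `2` and `3`. -/
lemma count_bound (A : Set ℕ) (z : ℕ → ℕ) (B : ℕ) (C : ℝ)
    (hz : ∀ p : ℕ, p.Prime → B < p → 1 ≤ z p ∧ z p ≤ p + 1 ∧
      ∀ n ∈ A, p ∣ n → p * z p ∣ n)
    (hcard : ∀ k : ℕ, 1 ≤ k → ∀ S : Finset ℕ, (∀ p ∈ S, p.Prime ∧ B < p ∧ z p = k) →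
      (S.card : ℝ) ≤ C * k) (ε : ℝ) (hε : 0 < ε) (hε1 : ε < 1) :
    ∀ᶠ x : ℝ in atTop, (((Finset.Icc 1 ⌊x⌋₊).filter fun n => n ∈ A).card : ℝ) ≤
      x * exp (-(logL x * (1 - ε))) := by
  obtain ⟨δ, hδdef⟩ : ∃ δ : ℝ, δ = ε / 8 := ⟨_, rfl⟩
  have hδ : 0 < δ := by rw [hδdef]; positivity
  have hδ8 : δ < 1 / 8 := by rw [hδdef]; linarith
  obtain ⟨M, hM0, hM⟩ := weight_sum z B C δ hδ (by linarith) (fun p h1 h2 => (hz p h1 h2).1) hcard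
  obtain ⟨J, hJ1, hJ2⟩ : ∃ J : ℕ, 2 ≤ (J + 1 : ℝ) * δ ∧ (J + 1 : ℝ) * δ ≤ 3 := by
    refine ⟨⌈2 / δ⌉₊, ?_, ?_⟩
    · have := Nat.le_ceil (2 / δ)
      rw [div_le_iff₀ hδ] at this
      nlinarith
    · have := Nat.ceil_lt_add_one (show 0 ≤ 2 / δ by positivity)
      have h2 : (⌈2 / δ⌉₊ : ℝ) * δ < (2 / δ + 1) * δ := by gcongr
      have h3 : (2 / δ + 1) * δ = 2 + δ := by field_simp
      nlinarith
  -- the grid `c j = (j + 1) δ`, and the `L ^ c j`-smooth counts at its points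
  let c : ℕ → ℝ := fun j => (j + 1) * δ
  have hc0 : ∀ j, 0 < c j := fun j => by simp only [c]; positivity
  have hcs : ∀ j, c (j + 1) = c j + δ := fun j => by simp only [c]; push_cast; ring
  have hsmooth : ∀ᶠ x : ℝ in atTop, ∀ j ∈ Finset.range (J + 1), ∀ d : ℕ, 1 ≤ d →
      (d : ℝ) ≤ exp (logL x * (3 * c j)) →
      ((Nat.smoothNumbersUpTo ⌊x / d⌋₊ (⌊exp (logL x * c j)⌋₊ + 1)).card : ℝ) ≤
        x / d * exp (logL x * (-((1 - δ) / (2 * c j)) + 2 * δ)) := by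
    rw [Filter.eventually_all_finset]
    intro j _
    exact smooth_count (c j) δ (3 * c j) (hc0 j) hδ (by linarith) (by have := hc0 j; positivity)
  have hBev : ∀ᶠ x : ℝ in atTop, (B : ℝ) ≤ exp (logL x * δ) :=
    (tendsto_exp_atTop.comp (tendsto_logL.atTop_mul_const hδ)).eventually_ge_atTop (B : ℝ)
  have hMev : ∀ᶠ x : ℝ in atTop, 1 + J * M + M ≤ exp (logL x * δ) :=
    (tendsto_exp_atTop.comp (tendsto_logL.atTop_mul_const hδ)).eventually_ge_atTop _
  filter_upwards [hsmooth, hBev, hMev, tendsto_logL.eventually_ge_atTop 1,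
    eventually_ge_atTop 1] with x hsm hB hMx hQ1 hx1
  set Q := logL x
  have hQ0 : 0 < Q := by linarith
  have hx0 : 0 < x := by linarith
  let N : ℕ → ℕ := fun j => ⌊exp (Q * c j)⌋₊ + 1
  set G := (Finset.Icc 1 ⌊x⌋₊).filter fun n => n ∈ A with hG
  have hGmem : ∀ n ∈ G, 1 ≤ n ∧ n ≤ ⌊x⌋₊ ∧ n ∈ A := by
    intro n hn
    simp only [hG, Finset.mem_filter, Finset.mem_Icc] at hn
    exact ⟨hn.1.1, hn.1.2, hn.2⟩
  -- primes beyond `N j` exceed `L ^ c j` and `B`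
  have hNlt : ∀ j p : ℕ, N j ≤ p → exp (Q * c j) ≤ p ∧ B < p := by
    intro j p hp
    have h1 : exp (Q * c j) < p := by
      calc exp (Q * c j) < ⌊exp (Q * c j)⌋₊ + 1 := Nat.lt_floor_add_one _
        _ ≤ p := by exact_mod_cast hp
    refine ⟨h1.le, ?_⟩
    have h2 : exp (Q * δ) ≤ exp (Q * c j) := by
      apply Real.exp_le_exp.2
      apply mul_le_mul_of_nonneg_left _ hQ0.le
      simp only [c]
      have : (0 : ℝ) ≤ j := by positivity
      nlinarith
    exact_mod_cast (hB.trans h2).trans_lt h1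
  set E := exp (-(Q * (1 - ε)) - Q * δ) with hE
  -- each class below has `O(x E)` elements; the factor `L ^ (-δ)` in `E` absorbs the constant
  -- `F0`: largest prime factor below `N 0`; `F j`: in `[N j, N (j + 1))`; `F1`: at least `N J`
  let F0 := G.filter fun n => n ∈ Nat.smoothNumbers (N 0)
  let F : ℕ → Finset ℕ := fun j =>
    G.filter fun n => n ∈ Nat.smoothNumbers (N (j + 1)) ∧ n ∉ Nat.smoothNumbers (N j)
  let F1 := G.filter fun n => n ∉ Nat.smoothNumbers (N J)
  have hcover : G ⊆ (F0 ∪ (Finset.range J).biUnion F) ∪ F1 := by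
    intro n hn
    by_cases hJs : n ∈ Nat.smoothNumbers (N J)
    · apply Finset.mem_union_left
      have key : ∀ i, n ∈ Nat.smoothNumbers (N i) →
          n ∈ Nat.smoothNumbers (N 0) ∨ ∃ j < i, n ∈ Nat.smoothNumbers (N (j + 1)) ∧
            n ∉ Nat.smoothNumbers (N j) := by
        intro i
        induction i with
        | zero => exact fun h => Or.inl h
        | succ i ih =>
          intro h
          by_cases h' : n ∈ Nat.smoothNumbers (N i)
          · rcases ih h' with h1 | ⟨j, hj, h1⟩
            · exact Or.inl h1
            · exact Or.inr ⟨j, by omega, h1⟩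
          · exact Or.inr ⟨i, by omega, h, h'⟩
      rcases key J hJs with h | ⟨j, hj, h⟩
      · exact Finset.mem_union_left _ (Finset.mem_filter.2 ⟨hn, h⟩)
      · exact Finset.mem_union_right _ (Finset.mem_biUnion.2
          ⟨j, Finset.mem_range.2 hj, Finset.mem_filter.2 ⟨hn, h⟩⟩)
    · exact Finset.mem_union_right _ (Finset.mem_filter.2 ⟨hn, hJs⟩)
  have hF0 : (F0.card : ℝ) ≤ x * E := by
    have hsub : F0 ⊆ Nat.smoothNumbersUpTo ⌊x / (1 : ℕ)⌋₊ (N 0) := by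
      intro n hn
      obtain ⟨h1, h2⟩ := Finset.mem_filter.1 hn
      refine Nat.mem_smoothNumbersUpTo.2 ⟨?_, h2⟩
      simpa using (hGmem n h1).2.1
    have h1 := hsm 0 (by simp) 1 le_rfl (by
      simp only [Nat.cast_one]
      exact Real.one_le_exp (by have := hc0 0; positivity))
    calc (F0.card : ℝ) ≤ _ := by exact_mod_cast Finset.card_le_card hsub
      _ ≤ _ := h1
      _ = x * exp (Q * (-((1 - δ) / (2 * c 0)) + 2 * δ)) := by simp
      _ ≤ x * E := by
          gcongr
          rw [hE]
          apply Real.exp_le_exp.2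
          have hc : c 0 = δ := by simp [c]
          rw [hc]
          have : 3 ≤ (1 - δ) / (2 * δ) := by rw [le_div_iff₀ (by positivity)]; linarith
          have h8 : ε = 8 * δ := by rw [hδdef]; ring
          rw [h8]
          nlinarith
  have hprime : ∀ j p : ℕ, p.Prime → N j ≤ p → 1 ≤ p * z p := by
    intro j p hp hNp
    exact Nat.mul_pos hp.pos (hz p hp (hNlt j p hNp).2).1
  have hF : ∀ j ∈ Finset.range J, ((F j).card : ℝ) ≤ M * (x * E) := by
    intro j hj
    set T := (Finset.Ico (N j) (N (j + 1))).filter Nat.Prime with hT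
    have hTm : ∀ p ∈ T, p.Prime ∧ N j ≤ p ∧ p < N (j + 1) := by
      intro p hp
      simp only [hT, Finset.mem_filter, Finset.mem_Ico] at hp
      exact ⟨hp.2, hp.1.1, hp.1.2⟩
    have h1 : ((F j).card : ℝ) ≤ ∑ p ∈ T,
        ((Nat.smoothNumbersUpTo ⌊x / ((p * z p : ℕ) : ℝ)⌋₊ (N (j + 1))).card : ℝ) := by
      apply card_le_sum_smooth z x hx0.le
      · intro n hn; exact (hGmem n (Finset.mem_filter.1 hn).1).2.1
      · intro n hn; exact (Finset.mem_filter.1 hn).2.1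
      · intro p hp; exact hprime j p (hTm p hp).1 (hTm p hp).2.1
      · intro n hn
        obtain ⟨hnG, hn1, hn2⟩ := Finset.mem_filter.1 hn
        obtain ⟨p, hp, hpn, hNp⟩ := exists_prime_ge_of_not_mem_smoothNumbers hn2
        refine ⟨p, ?_, (hz p hp (hNlt j p hNp).2).2.2 n (hGmem n hnG).2.2 hpn⟩
        simp only [hT, Finset.mem_filter, Finset.mem_Ico]
        exact ⟨⟨hNp, Nat.mem_smoothNumbers'.1 hn1 p hp hpn⟩, hp⟩
    have h2 : ∀ p ∈ T,
        ((Nat.smoothNumbersUpTo ⌊x / ((p * z p : ℕ) : ℝ)⌋₊ (N (j + 1))).card : ℝ) ≤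
        x * exp (Q * (-((1 - δ) / (2 * c (j + 1))) + 2 * δ)) * (1 / ((p * z p : ℕ) : ℝ)) := by
      intro p hp
      obtain ⟨hpp, hp1, hp2⟩ := hTm p hp
      refine (hsm (j + 1) (by simp at hj ⊢; omega) (p * z p) (hprime j p hpp hp1) ?_).trans
        (le_of_eq (by ring))
      have hpe : (p : ℝ) ≤ exp (Q * c (j + 1)) := by
        have : p ≤ ⌊exp (Q * c (j + 1))⌋₊ := Nat.lt_succ_iff.1 hp2
        exact (Nat.le_floor_iff (Real.exp_pos _).le).1 this
      have hzle := (hz p hpp (hNlt j p hp1).2).2.1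
      have h3 : p * z p ≤ p ^ 3 := by
        have := hpp.two_le
        calc p * z p ≤ p * (p + 1) := by gcongr
          _ ≤ p * (p * p) := Nat.mul_le_mul_left _ (by nlinarith)
          _ = p ^ 3 := by ring
      calc ((p * z p : ℕ) : ℝ) ≤ (p : ℝ) ^ 3 := by exact_mod_cast h3
        _ ≤ exp (Q * c (j + 1)) ^ 3 := by gcongr
        _ = _ := by rw [← Real.exp_nat_mul]; congr 1; push_cast; ring
    have h3 := hM (exp (Q * c j)) (Real.exp_pos _) T (fun p hp =>
      ⟨(hTm p hp).1, (hNlt j p (hTm p hp).2.1).2, (hNlt j p (hTm p hp).2.1).1⟩)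
    rw [← Real.exp_mul] at h3
    calc ((F j).card : ℝ) ≤ _ := h1
      _ ≤ _ := Finset.sum_le_sum h2
      _ = x * exp (Q * (-((1 - δ) / (2 * c (j + 1))) + 2 * δ)) *
            ∑ p ∈ T, (1 / ((p * z p : ℕ) : ℝ)) := by rw [Finset.mul_sum]
      _ ≤ x * exp (Q * (-((1 - δ) / (2 * c (j + 1))) + 2 * δ)) *
            (M * exp (Q * c j * (-(1 / 2 - δ)))) := by gcongr
      _ = M * (x * exp (Q * (-((1 - δ) / (2 * c (j + 1))) + 2 * δ) +
            Q * c j * (-(1 / 2 - δ)))) := by rw [Real.exp_add]; ring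
      _ ≤ M * (x * E) := by
          gcongr
          rw [hE]
          apply Real.exp_le_exp.2
          have h8 : ε = 8 * δ := by rw [hδdef]; ring
          have hcj : c j = c (j + 1) - δ := by rw [hcs]; ring
          have hcle : c (j + 1) ≤ 3 := by
            refine le_trans ?_ hJ2
            simp only [c]
            have : (j : ℝ) + 1 ≤ J := by exact_mod_cast Finset.mem_range.1 hj
            push_cast
            gcongr
          have hcp := hc0 (j + 1)
          rw [hcj, h8]
          set y := c (j + 1)
          -- AM-GM: `y / 2 + 1 / (2 y) ≥ 1`
          have hamgm : (1 - δ) * (1 - y / 2) ≤ (1 - δ) / (2 * y) := by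
            rw [le_div_iff₀ (by positivity)]
            have : (1 - y / 2) * (2 * y) ≤ 1 := by nlinarith [sq_nonneg (y - 1)]
            nlinarith
          have : -((1 - δ) / (2 * y)) + 2 * δ + (y - δ) * (-(1 / 2 - δ)) ≤
              -(1 - 8 * δ) - δ := by nlinarith
          nlinarith
  have hF1 : (F1.card : ℝ) ≤ M * (x * E) := by
    set T := (Finset.Ico (N J) (⌊x⌋₊ + 1)).filter Nat.Prime with hT
    have hTm : ∀ p ∈ T, p.Prime ∧ N J ≤ p := by
      intro p hp
      simp only [hT, Finset.mem_filter, Finset.mem_Ico] at hp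
      exact ⟨hp.2, hp.1.1⟩
    have h1 : (F1.card : ℝ) ≤ ∑ p ∈ T,
        ((Nat.smoothNumbersUpTo ⌊x / ((p * z p : ℕ) : ℝ)⌋₊ (⌊x⌋₊ + 1)).card : ℝ) := by
      apply card_le_sum_smooth z x hx0.le
      · intro n hn; exact (hGmem n (Finset.mem_filter.1 hn).1).2.1
      · intro n hn
        have := hGmem n (Finset.mem_filter.1 hn).1
        exact Nat.mem_smoothNumbers_of_lt this.1 (Nat.lt_succ_of_le this.2.1)
      · intro p hp; exact hprime J p (hTm p hp).1 (hTm p hp).2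
      · intro n hn
        obtain ⟨hnG, hn2⟩ := Finset.mem_filter.1 hn
        obtain ⟨p, hp, hpn, hNp⟩ := exists_prime_ge_of_not_mem_smoothNumbers hn2
        have hG' := hGmem n hnG
        refine ⟨p, ?_, (hz p hp (hNlt J p hNp).2).2.2 n hG'.2.2 hpn⟩
        simp only [hT, Finset.mem_filter, Finset.mem_Ico]
        exact ⟨⟨hNp, Nat.lt_succ_of_le ((Nat.le_of_dvd hG'.1 hpn).trans hG'.2.1)⟩, hp⟩
    have h2 : ∀ p ∈ T,
        ((Nat.smoothNumbersUpTo ⌊x / ((p * z p : ℕ) : ℝ)⌋₊ (⌊x⌋₊ + 1)).card : ℝ) ≤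
        x * (1 / ((p * z p : ℕ) : ℝ)) := by
      intro p hp
      have h := Nat.smoothNumbersUpTo_card_add_roughNumbersUpTo_card
        ⌊x / ((p * z p : ℕ) : ℝ)⌋₊ (⌊x⌋₊ + 1)
      calc _ ≤ (⌊x / ((p * z p : ℕ) : ℝ)⌋₊ : ℝ) := by exact_mod_cast (by omega)
        _ ≤ x / ((p * z p : ℕ) : ℝ) := Nat.floor_le (by positivity)
        _ = _ := by ring
    have h3 := hM (exp (Q * c J)) (Real.exp_pos _) T (fun p hp =>
      ⟨(hTm p hp).1, (hNlt J p (hTm p hp).2).2, (hNlt J p (hTm p hp).2).1⟩)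
    rw [← Real.exp_mul] at h3
    calc (F1.card : ℝ) ≤ _ := h1
      _ ≤ _ := Finset.sum_le_sum h2
      _ = x * ∑ p ∈ T, (1 / ((p * z p : ℕ) : ℝ)) := by rw [Finset.mul_sum]
      _ ≤ x * (M * exp (Q * c J * (-(1 / 2 - δ)))) := by gcongr
      _ = M * (x * exp (Q * c J * (-(1 / 2 - δ)))) := by ring
      _ ≤ M * (x * E) := by
          gcongr
          rw [hE]
          apply Real.exp_le_exp.2
          have h8 : ε = 8 * δ := by rw [hδdef]; ring
          have hcJ : 2 ≤ c J := hJ1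
          rw [h8]
          have : c J * (-(1 / 2 - δ)) ≤ -(1 - 8 * δ) - δ := by nlinarith
          nlinarith
  calc (G.card : ℝ) ≤ F0.card + ∑ j ∈ Finset.range J, ((F j).card : ℝ) + F1.card := by
        have h1 := (Finset.card_le_card hcover).trans (Finset.card_union_le _ _)
        have h2 := Finset.card_union_le F0 ((Finset.range J).biUnion F)
        have h3 : ((Finset.range J).biUnion F).card ≤ ∑ j ∈ Finset.range J, (F j).card :=
          Finset.card_biUnion_le
        have : G.card ≤ F0.card + ∑ j ∈ Finset.range J, (F j).card + F1.card := by omega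
        exact_mod_cast this
    _ ≤ x * E + ∑ j ∈ Finset.range J, M * (x * E) + M * (x * E) := by
        gcongr with j hj
        exact hF j hj
    _ = (1 + J * M + M) * (x * E) := by
        rw [Finset.sum_const, Finset.card_range, nsmul_eq_mul]; ring
    _ ≤ exp (Q * δ) * (x * E) := by gcongr
    _ = x * exp (-(Q * (1 - ε))) := by
        rw [hE, mul_left_comm, ← Real.exp_add]; congr 2; ring

/-! ### The theorem for Lucas sequences -/

lemma not_dvd_of_natAbs_lt {p : ℕ} {m : ℤ} (hm : m ≠ 0) (h : m.natAbs < p) : ¬ (p : ℤ) ∣ m := by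
  intro hd
  have := Nat.le_of_dvd (Int.natAbs_pos.2 hm) (Int.natCast_dvd.1 hd)
  omega

theorem statement1 (a₁ a₂ : ℤ) (u : ℕ → ℤ)
    (ha₂ : a₂ ≠ 0) (hcop : IsCoprime a₁ a₂)
    (hu0 : u 0 = 0) (hu1 : u 1 = 1)
    (hrec : ∀ n : ℕ, u (n + 2) = a₁ * u (n + 1) + a₂ * u n)
    (hΔ : a₁ ^ 2 + 4 * a₂ ≠ 0)
    (hnd : ∀ α β : ℂ, α ^ 2 - (a₁ : ℂ) * α - (a₂ : ℂ) = 0 →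
      β ^ 2 - (a₁ : ℂ) * β - (a₂ : ℂ) = 0 → α ≠ β →
      ∀ m : ℕ, 0 < m → (α / β) ^ m ≠ 1) :
    ∀ ε : ℝ, 0 < ε → ε < 1 →
      ∃ x₀ : ℝ, ∀ x : ℝ, x₀ ≤ x →
        (countDiv u x : ℝ) ≤ x / Lfun x ^ (1 - ε) := by
  intro ε hε hε1
  -- primes beyond `B` divide neither `a₂` nor the discriminant
  set B := a₂.natAbs + (a₁ ^ 2 + 4 * a₂).natAbs with hB
  have hrank : ∀ p : ℕ, ∃ z : ℕ, p.Prime → B < p →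
      1 ≤ z ∧ z ≤ p + 1 ∧ Nat.Coprime p z ∧ ∀ n : ℕ, (p : ℤ) ∣ u n ↔ z ∣ n := by
    intro p
    by_cases h : p.Prime ∧ B < p
    · obtain ⟨z, hz⟩ := exists_rank a₁ a₂ u hu0 hu1 hrec p h.1
        (not_dvd_of_natAbs_lt ha₂ (by omega)) (not_dvd_of_natAbs_lt hΔ (by omega))
      exact ⟨z, fun _ _ => hz⟩
    · exact ⟨0, fun h1 h2 => absurd ⟨h1, h2⟩ h⟩
  choose z hz using hrank
  have hcount := count_bound {n : ℕ | (n : ℤ) ∣ u n} z B (a₁.natAbs + a₂.natAbs : ℕ)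
    (fun p hp hpB => by
      obtain ⟨h1, h2, h3, h4⟩ := hz p hp hpB
      refine ⟨h1, h2, fun n hn hpn => h3.mul_dvd_of_dvd_of_dvd hpn ?_⟩
      exact (h4 n).1 ((Int.natCast_dvd_natCast.2 hpn).trans hn))
    (fun k hk S hS => by
      have hne := lucas_ne_zero a₁ a₂ u ha₂ hu0 hu1 hrec hΔ hnd k hk
      have := card_primes_le S (u k).natAbs _ (Int.natAbs_pos.2 hne) (fun p hp => by
        obtain ⟨h1, h2, h3⟩ := hS p hp
        exact ⟨h1, Int.natCast_dvd.1 (((hz p h1 h2).2.2.2 k).2 (by rw [h3]))⟩)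
        (lucas_abs_le a₁ a₂ u hu0 hu1 hrec k)
      exact_mod_cast this) ε hε hε1
  obtain ⟨x₀, hx₀⟩ := eventually_atTop.1 hcount
  refine ⟨x₀, fun x hx => ?_⟩
  have h := hx₀ x hx
  have hL : x / Lfun x ^ (1 - ε) = x * exp (-(logL x * (1 - ε))) := by
    rw [Lfun, ← Real.exp_mul, Real.exp_neg, div_eq_mul_inv]
    rfl
  rw [hL, countDiv]
  convert h
  exact Iff.rfl
end

section
/- Call a positive integer n Lucas special if n = 2·s·M_y for some integer y ≥ 3 and some squarefree positive integer s with gcd(s, M_y) = 1 such that for every prime p dividing s one has (p² − 1) ∣ M_y, where M_y = lcm{1, 2, …, y}. Then for every nondegenerate Lucas sequence u with a₂ = 1 or a₂ = −1, every Lucas special number n satisfies n ∣ u_n. -/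
/-!
The divisibility `n ∣ u n` is checked one prime power `p ^ k ∣ n` at a time, and rests on two facts.

* Since `a₂ = ±1`, every prime `p` divides one of `u (p - 1)`, `u p`, `u (p + 1)`: over an algebraic
  closure of `𝔽_p` the Frobenius map permutes the roots `α, β` of `X² - a₁X - a₂`, so either
  `α = β`, or `α ^ p = α` and `β ^ p = β`, or `α ^ p = β` and `β ^ p = α`
  (`exists_rank_of_apparition`).
* If `p ∣ u z` then `p ^ (j + 1) ∣ u (z * p ^ j)`, because
  `u ((k + 1) n) ≡ (k + 1) u n (u (n + 1)) ^ k` modulo `(u n) ^ 2` (`pow_dvd_of_prime_dvd`).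

It remains to see that `z * p ^ (k - 1) ∣ 2 s M_y` for the index `z ∈ {p - 1, p, p + 1}` given by the
first fact. For `z = p` this is clear; otherwise `z` is coprime to `p` and `z ∣ 2 s M_y` suffices.
If `p ∣ s`, then `z ∣ p² - 1 ∣ M_y`. If `p ∣ M_y` is odd, then `p ≤ y`, so that `p - 1` and
`(p + 1) / 2` divide `M_y`; for `p = y` it is the factor `2` of `n` that makes `p + 1` a divisor.
For `p = 2` one uses `3 ∣ M_y`.
-/

/-- `M_y = lcm{1, 2, …, y}`. -/
def Mlcm (y : ℕ) : ℕ := (Finset.Icc 1 y).lcm id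

/-- A positive integer `n` is Lucas special if `n = 2·s·M_y` for some integer
`y ≥ 3` and some squarefree positive integer `s` coprime to `M_y` such that
`p² − 1 ∣ M_y` for every prime `p ∣ s`. -/
def LucasSpecial (n : ℕ) : Prop :=
  ∃ y s : ℕ, 3 ≤ y ∧ 0 < s ∧ Squarefree s ∧ Nat.Coprime s (Mlcm y) ∧
    (∀ p : ℕ, p.Prime → p ∣ s → (p ^ 2 - 1) ∣ Mlcm y) ∧
    n = 2 * s * Mlcm y

section Lucas

variable {a₁ a₂ : ℤ} {u : ℕ → ℤ}

theorem lucas_add_aux (hu0 : u 0 = 0) (hu1 : u 1 = 1)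
    (hrec : ∀ n : ℕ, u (n + 2) = a₁ * u (n + 1) + a₂ * u n) (m n : ℕ) :
    u (m + n) = u m * u (n + 1) + u n * u (m + 1) - a₁ * u m * u n ∧
      u (m + n + 1) = u (m + 1) * u (n + 1) + a₂ * u m * u n := by
  induction n with
  | zero => simp [hu0, hu1]
  | succ n ih =>
    obtain ⟨h1, h2⟩ := ih
    have e1 := hrec (m + n)
    have e2 := hrec n
    refine ⟨?_, ?_⟩
    · rw [← add_assoc, h2, e2]; ring
    · rw [show m + (n + 1) + 1 = m + n + 2 by ring, e1, h1, h2, e2]; ring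

/-- First-order expansion of `u` along multiples of `n`. -/
theorem lucas_mul_expansion (hu0 : u 0 = 0) (hu1 : u 1 = 1)
    (hrec : ∀ n : ℕ, u (n + 2) = a₁ * u (n + 1) + a₂ * u n) (n k : ℕ) :
    (∃ c, u ((k + 1) * n) = (k + 1) * u n * u (n + 1) ^ k + c * u n ^ 2) ∧
      ∃ d, u ((k + 1) * n + 1) = u (n + 1) ^ (k + 1) + d * u n := by
  induction k with
  | zero => exact ⟨⟨0, by simp⟩, ⟨0, by simp⟩⟩
  | succ k ih =>
    obtain ⟨⟨c, hc⟩, ⟨d, hd⟩⟩ := ih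
    obtain ⟨h1, h2⟩ := lucas_add_aux hu0 hu1 hrec ((k + 1) * n) n
    rw [hc, hd] at h1 h2
    rw [show (k + 1 + 1) * n = (k + 1) * n + n by ring, h1, h2]
    refine ⟨⟨c * u (n + 1) + d - a₁ * ((k + 1) * u (n + 1) ^ k + c * u n), ?_⟩,
      ⟨d * u (n + 1) + a₂ * ((k + 1) * u n * u (n + 1) ^ k + c * u n ^ 2), ?_⟩⟩
    · push_cast; ring
    · ring

theorem lucas_dvd_of_dvd (hu0 : u 0 = 0) (hu1 : u 1 = 1)
    (hrec : ∀ n : ℕ, u (n + 2) = a₁ * u (n + 1) + a₂ * u n) {m n : ℕ} (h : m ∣ n) :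
    u m ∣ u n := by
  obtain ⟨k, rfl⟩ := h
  cases k with
  | zero => simp [hu0]
  | succ k =>
    obtain ⟨⟨c, hc⟩, -⟩ := lucas_mul_expansion hu0 hu1 hrec m k
    rw [mul_comm, hc]
    exact ⟨(k + 1) * u (m + 1) ^ k + c * u m, by ring⟩

theorem pow_dvd_of_prime_dvd (hu0 : u 0 = 0) (hu1 : u 1 = 1)
    (hrec : ∀ n : ℕ, u (n + 2) = a₁ * u (n + 1) + a₂ * u n) {p z : ℕ} (hp : p.Prime)
    (h : (p : ℤ) ∣ u z) (j : ℕ) : (p : ℤ) ^ (j + 1) ∣ u (z * p ^ j) := by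
  induction j with
  | zero => simpa using h
  | succ j ih =>
    obtain ⟨q, rfl⟩ : ∃ q, p = q + 1 := ⟨p - 1, by have := hp.pos; omega⟩
    obtain ⟨⟨c, hc⟩, -⟩ := lucas_mul_expansion hu0 hu1 hrec (z * (q + 1) ^ j) q
    rw [show z * (q + 1) ^ (j + 1) = (q + 1) * (z * (q + 1) ^ j) by ring, hc]
    obtain ⟨e, he⟩ := ih
    rw [he]
    refine ⟨e * u (z * (q + 1) ^ j + 1) ^ q + c * ((q + 1 : ℕ) : ℤ) ^ j * e ^ 2, ?_⟩
    push_cast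
    ring

/-- `exists_rank_of_apparition` with the algebraically closed field `K` of characteristic `p`, in
which the roots are taken, as a parameter. -/
theorem exists_rank_of_apparition_aux {p : ℕ} (hp : p.Prime) (K : Type) [Field K] [IsAlgClosed K]
    [CharP K p] (ha₂ : a₂ = 1 ∨ a₂ = -1) (hu0 : u 0 = 0) (hu1 : u 1 = 1)
    (hrec : ∀ n : ℕ, u (n + 2) = a₁ * u (n + 1) + a₂ * u n) :
    (p : ℤ) ∣ u (p - 1) ∨ (p : ℤ) ∣ u p ∨ (p : ℤ) ∣ u (p + 1) := by
  have : Fact p.Prime := ⟨hp⟩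
  obtain ⟨α, hα⟩ : ∃ α : K, α ^ 2 = a₁ * α + a₂ := by
    have hdeg : (Polynomial.X ^ 2 - (Polynomial.C (a₁ : K) * Polynomial.X +
        Polynomial.C (a₂ : K))).degree ≠ 0 := by
      have : (Polynomial.X ^ 2 - (Polynomial.C (a₁ : K) * Polynomial.X +
        Polynomial.C (a₂ : K))).degree = 2 := by compute_degree!
      rw [this]; decide
    obtain ⟨α, h⟩ := IsAlgClosed.exists_root _ hdeg
    refine ⟨α, ?_⟩
    simpa [Polynomial.IsRoot, sub_eq_zero] using h
  obtain ⟨β, hβ⟩ : ∃ β : K, β = a₁ - α := ⟨_, rfl⟩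
  have hprod : α * β = -a₂ := by rw [hβ]; linear_combination -hα
  have hβ2 : β ^ 2 = a₁ * β + a₂ := by rw [hβ]; linear_combination hα
  have ha0 : (a₂ : K) ≠ 0 := by rcases ha₂ with h | h <;> simp [h]
  have hα0 : α ≠ 0 := by
    rintro rfl
    simp at hprod
    exact ha0 hprod
  have hβ0 : β ≠ 0 := by
    intro h
    rw [h] at hprod
    simp at hprod
    exact ha0 hprod
  have hdvd : ∀ n, (u n : K) = 0 → (p : ℤ) ∣ u n := fun n h =>
    (CharP.intCast_eq_zero_iff K p _).1 h
  have hbinet : ∀ n, (u n : K) * (α - β) = α ^ n - β ^ n ∧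
      (u (n + 1) : K) * (α - β) = α ^ (n + 1) - β ^ (n + 1) := by
    intro n
    induction n with
    | zero => simp [hu0, hu1]
    | succ n ih =>
      refine ⟨ih.2, ?_⟩
      rw [hrec n]
      push_cast
      linear_combination (a₁ : K) * ih.2 + (a₂ : K) * ih.1 - α ^ n * hα + β ^ n * hβ2
  by_cases hαβ : α = β
  · right; left
    apply hdvd
    -- with a double root `α`, the Binet formula degenerates to `u n = n α ^ (n - 1)`
    have hdbl : ∀ n, (u n : K) * α = n * α ^ n ∧ (u (n + 1) : K) * α = (n + 1) * α ^ (n + 1) := by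
      have h1 : (a₁ : K) = 2 * α := by linear_combination -hβ - hαβ
      have h2 : (a₂ : K) = - α ^ 2 := by linear_combination hprod + α * hαβ
      intro n
      induction n with
      | zero => simp [hu0, hu1]
      | succ n ih =>
        refine ⟨by rw [ih.2]; push_cast; ring, ?_⟩
        rw [hrec n]
        push_cast
        linear_combination (a₁ : K) * ih.2 + (a₂ : K) * ih.1 +
          (n + 1) * α ^ (n + 1) * h1 + n * α ^ n * h2
    have := (hdbl p).1
    rw [CharP.cast_eq_zero K p, zero_mul] at this
    exact (mul_eq_zero.1 this).resolve_right hα0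
  · have hsub : α - β ≠ 0 := sub_ne_zero.2 hαβ
    have hFa : ∀ z : ℤ, (z : K) ^ p = z := fun z => by
      have := map_intCast (frobenius K p) z
      rwa [frobenius_def] at this
    have hroot : (α ^ p - α) * (α ^ p - β) = 0 := by
      have h := congrArg (frobenius K p) hα
      simp only [map_pow, map_add, map_mul, map_intCast, frobenius_def] at h
      linear_combination h + hprod - α ^ p * hβ
    have hβp : β ^ p = a₁ - α ^ p := by
      rw [hβ, sub_pow_char, hFa]
    have hp1 : p - 1 + 1 = p := Nat.sub_add_cancel hp.pos
    rcases mul_eq_zero.1 hroot with h | h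
    · left
      apply hdvd
      have h1 : α ^ (p - 1) = 1 := by
        apply mul_right_cancel₀ hα0
        rw [← pow_succ, hp1]; linear_combination h
      have h2 : β ^ (p - 1) = 1 := by
        apply mul_right_cancel₀ hβ0
        rw [← pow_succ, hp1]; linear_combination hβp - h - hβ
      have := (hbinet (p - 1)).1
      rw [h1, h2, sub_self] at this
      exact (mul_eq_zero.1 this).resolve_right hsub
    · right; right
      apply hdvd
      have h3 := (hbinet p).2
      have : (u (p + 1) : K) * (α - β) = 0 := by
        rw [h3, pow_succ, pow_succ, hβp]
        linear_combination (α + β) * h + β * hβ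
      exact (mul_eq_zero.1 this).resolve_right hsub

theorem exists_rank_of_apparition (ha₂ : a₂ = 1 ∨ a₂ = -1) (hu0 : u 0 = 0) (hu1 : u 1 = 1)
    (hrec : ∀ n : ℕ, u (n + 2) = a₁ * u (n + 1) + a₂ * u n) {p : ℕ} (hp : p.Prime) :
    (p : ℤ) ∣ u (p - 1) ∨ (p : ℤ) ∣ u p ∨ (p : ℤ) ∣ u (p + 1) := by
  have : Fact p.Prime := ⟨hp⟩
  have : CharP (AlgebraicClosure (ZMod p)) p :=
    charP_of_injective_algebraMap (algebraMap (ZMod p) _).injective p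
  exact exists_rank_of_apparition_aux hp (AlgebraicClosure (ZMod p)) ha₂ hu0 hu1 hrec

end Lucas

theorem dvd_Mlcm {m y : ℕ} (h1 : 1 ≤ m) (h2 : m ≤ y) : m ∣ Mlcm y :=
  Finset.dvd_lcm (f := id) (Finset.mem_Icc.2 ⟨h1, h2⟩)

theorem prime_le_of_dvd_Mlcm {p y : ℕ} (hp : p.Prime) (h : p ∣ Mlcm y) : p ≤ y := by
  have h2 : Mlcm y ∣ ∏ i ∈ Finset.Icc 1 y, i :=
    Finset.lcm_dvd fun b hb => Finset.dvd_prod_of_mem (fun i => i) hb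
  obtain ⟨i, hi, hpi⟩ := (Prime.dvd_finsetProd_iff hp.prime _).1 (h.trans h2)
  rw [Finset.mem_Icc] at hi
  exact (Nat.le_of_dvd (by omega) hpi).trans hi.2

/-- The indices supplied by the rank of apparition and by lifting divide a Lucas special number; the
remaining index `p * p ^ j` does so by assumption. -/
theorem index_dvd {y s p j : ℕ} (hy : 3 ≤ y)
    (hs : ∀ p : ℕ, p.Prime → p ∣ s → (p ^ 2 - 1) ∣ Mlcm y) (hp : p.Prime)
    (hpn : p ^ (j + 1) ∣ 2 * s * Mlcm y) :
    (p - 1) * p ^ j ∣ 2 * s * Mlcm y ∧ (p + 1) * p ^ j ∣ 2 * s * Mlcm y := by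
  have h2M : 2 ∣ Mlcm y := dvd_Mlcm (by norm_num) (by omega)
  have hMn : Mlcm y ∣ 2 * s * Mlcm y := Dvd.intro_left _ rfl
  have hc1 : Nat.Coprime (p - 1) (p ^ j) := by
    apply Nat.Coprime.pow_right
    exact (Nat.coprime_self_sub_left hp.pos).2 (by simp)
  have hc2 : Nat.Coprime (p + 1) (p ^ j) := by
    apply Nat.Coprime.pow_right
    simp
  have hpj : p ^ j ∣ 2 * s * Mlcm y := (pow_dvd_pow p (Nat.le_succ j)).trans hpn
  suffices h : p - 1 ∣ 2 * s * Mlcm y ∧ p + 1 ∣ 2 * s * Mlcm y from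
    ⟨hc1.mul_dvd_of_dvd_of_dvd h.1 hpj, hc2.mul_dvd_of_dvd_of_dvd h.2 hpj⟩
  rcases hp.eq_two_or_odd with rfl | hodd
  · exact ⟨by simp, (dvd_Mlcm (by norm_num) hy).trans hMn⟩
  by_cases hps : p ∣ s
  · have hM := (hs p hp hps).trans hMn
    have hf : p ^ 2 - 1 = (p + 1) * (p - 1) := by simpa using Nat.sq_sub_sq p 1
    rw [hf] at hM
    exact ⟨(Dvd.intro_left _ rfl).trans hM, (Dvd.intro _ rfl).trans hM⟩
  · have hpn' : p ∣ 2 * s * Mlcm y := (dvd_pow_self p (Nat.succ_ne_zero j)).trans hpn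
    have hpM : p ∣ Mlcm y := by
      rcases hp.dvd_mul.1 hpn' with h | h
      · rcases hp.dvd_mul.1 h with h | h
        · exact ((Nat.prime_dvd_prime_iff_eq hp Nat.prime_two).1 h ▸ h2M)
        · exact absurd h hps
      · exact h
    have hle := prime_le_of_dvd_Mlcm hp hpM
    have htwo := hp.two_le
    refine ⟨(dvd_Mlcm (by omega) (by omega)).trans hMn, ?_⟩
    have hhalf : (p + 1) / 2 ∣ Mlcm y := dvd_Mlcm (by omega) (by omega)
    have he : p + 1 = 2 * ((p + 1) / 2) := by omega
    rw [he]
    exact mul_dvd_mul (Dvd.intro _ rfl) hhalf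

theorem statement2 (a₁ a₂ : ℤ) (u : ℕ → ℤ)
    (ha₂ : a₂ = 1 ∨ a₂ = -1) (hcop : IsCoprime a₁ a₂)
    (hu0 : u 0 = 0) (hu1 : u 1 = 1)
    (hrec : ∀ n : ℕ, u (n + 2) = a₁ * u (n + 1) + a₂ * u n)
    (hΔ : a₁ ^ 2 + 4 * a₂ ≠ 0)
    (hnd : ∀ α β : ℂ, α ^ 2 - (a₁ : ℂ) * α - (a₂ : ℂ) = 0 →
      β ^ 2 - (a₁ : ℂ) * β - (a₂ : ℂ) = 0 → α ≠ β →
      ∀ m : ℕ, 0 < m → (α / β) ^ m ≠ 1) :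
    ∀ n : ℕ, LucasSpecial n → (n : ℤ) ∣ u n := by
  rintro n ⟨y, s, hy, -, -, -, hs, rfl⟩
  rw [Int.natCast_dvd, Nat.dvd_iff_prime_pow_dvd_dvd]
  intro p k hp hpk
  rw [← Int.natCast_dvd]
  cases k with
  | zero => simp
  | succ j =>
    push_cast
    obtain ⟨h1, h2⟩ := index_dvd hy hs hp hpk
    have h3 : p * p ^ j ∣ 2 * s * Mlcm y := by rwa [← pow_succ']
    rcases exists_rank_of_apparition ha₂ hu0 hu1 hrec hp with h | h | h
    · exact (pow_dvd_of_prime_dvd hu0 hu1 hrec hp h j).trans (lucas_dvd_of_dvd hu0 hu1 hrec h1)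
    · exact (pow_dvd_of_prime_dvd hu0 hu1 hrec hp h j).trans (lucas_dvd_of_dvd hu0 hu1 hrec h3)
    · exact (pow_dvd_of_prime_dvd hu0 hu1 hrec hp h j).trans (lucas_dvd_of_dvd hu0 hu1 hrec h2)
end

section
/- Fix a real number v > 1 and assume that for every ε > 0 there is y₀ such that for all y ≥ y₀, the number of primes p ≤ y^v for which p² − 1 is y-smooth is at least y^{v−ε}. Then for every ε > 0 there is x₀ such that for all x ≥ x₀, the number of Lucas special integers n ≤ x is at least x^{1 − 1/v − ε}. (A positive integer n is Lucas special if n = 2·s·M_y for some integer y ≥ 3 and some squarefree positive integer s with gcd(s, M_y) = 1 such that every prime p ∣ s satisfies (p² − 1) ∣ M_y, where M_y = lcm{1, 2, …, y}.) -/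
open Classical in
/-- The number of primes `p ≤ x` such that `p² − 1` is `y`-smooth. -/
noncomputable def smoothPrimeCount (x y : ℝ) : ℕ :=
  ((Finset.Icc 1 ⌊x⌋₊).filter fun p : ℕ =>
    p.Prime ∧ ∀ q : ℕ, q.Prime → q ∣ p ^ 2 - 1 → (q : ℝ) ≤ y).card

open Classical in
/-- The number of Lucas special integers `n ≤ x`. -/
noncomputable def specialCount (x : ℝ) : ℕ :=
  ((Finset.Icc 1 ⌊x⌋₊).filter fun n : ℕ => LucasSpecial n).card

/-! ### Primes with `p ^ 2 - 1 ∣ M_z` -/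

/-- A `z`-smooth `n` not dividing `M_z` is divisible by the least power of some prime `q ≤ z`
that exceeds `z`, namely `q ^ (Nat.log q z + 1)`; this modulus depends only on `q` and `z`. -/
theorem exists_modulus_dvd {n z : ℕ} (hn : ∀ q : ℕ, q.Prime → q ∣ n → q ≤ z)
    (h : ¬ n ∣ Mlcm z) : ∃ q ∈ Finset.Icc 1 z, q.Prime ∧ q ^ (Nat.log q z + 1) ∣ n := by
  rw [Nat.dvd_iff_prime_pow_dvd_dvd] at h
  push Not at h
  obtain ⟨q, k, hq, hk, hM⟩ := h
  have hk0 : k ≠ 0 := by rintro rfl; simp at hM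
  have hqz := hn q hq ((dvd_pow_self q hk0).trans hk)
  refine ⟨q, Finset.mem_Icc.2 ⟨hq.one_lt.le, hqz⟩, hq, ?_⟩
  by_cases hkl : k ≤ Nat.log q z
  · refine absurd ?_ hM
    refine Finset.dvd_lcm (f := id) (Finset.mem_Icc.2 ⟨Nat.one_le_pow _ _ hq.pos, ?_⟩)
    exact Nat.pow_le_of_le_log (by have := hq.pos; omega) hkl
  · exact (pow_dvd_pow q (by omega)).trans hk

/-- With `A = n - 1` this splits `q ^ a ∣ n ^ 2 - 1`. Since `gcd(A, A + 2) ∣ 2`, all of `q ^ a` up to a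
factor `2` (needed only for `q = 2`) divides one of the two factors. -/
theorem primePow_dvd_two_mul {q a A : ℕ} (hq : q.Prime) (h : q ^ a ∣ A * (A + 2)) :
    q ^ a ∣ 2 * A ∨ q ^ a ∣ 2 * (A + 2) := by
  obtain ⟨d, e, hd, he, hde⟩ := exists_dvd_and_dvd_of_dvd_mul h
  obtain ⟨i, -, rfl⟩ := (Nat.dvd_prime_pow hq).1 (Dvd.intro _ hde.symm)
  obtain ⟨j, -, rfl⟩ := (Nat.dvd_prime_pow hq).1 (Dvd.intro_left _ hde.symm)
  rw [hde]
  rcases le_total i j with hij | hij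
  · right
    have : q ^ i ∣ 2 := (Nat.dvd_add_right hd).1 ((pow_dvd_pow q hij).trans he)
    exact mul_dvd_mul this he
  · left
    have : q ^ j ∣ 2 := (Nat.dvd_add_right ((pow_dvd_pow q hij).trans hd)).1 he
    rw [mul_comm]
    exact mul_dvd_mul this hd

theorem card_progression_le (X m c : ℕ) :
    ((Finset.Icc 1 X).filter fun n => m ∣ 2 * (n - 1 + c)).card ≤ 2 * (X - 1 + c) / m + 1 := by
  rw [← Finset.card_range (2 * (X - 1 + c) / m + 1)]
  refine Finset.card_le_card_of_injOn (fun n => 2 * (n - 1 + c) / m) ?_ ?_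
  · intro n hn
    simp only [Finset.coe_filter, Finset.mem_Icc, Set.mem_ofPred_eq] at hn
    simp only [Finset.coe_range, Set.mem_Iio]
    exact Nat.lt_succ_of_le (Nat.div_le_div_right (by omega))
  · intro n hn n' hn' h
    simp only [Finset.coe_filter, Finset.mem_Icc, Set.mem_ofPred_eq] at hn hn'
    have := (Nat.div_left_inj hn.2 hn'.2).1 h
    omega

theorem card_bad_le (X q a : ℕ) (hq : q.Prime) :
    (((Finset.Icc 1 X).filter fun n => q ^ a ∣ n ^ 2 - 1).card : ℝ)
      ≤ 4 * (X + 1) / (q ^ a : ℕ) + 2 := by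
  have hm : 0 < q ^ a := pow_pos hq.pos a
  have hsub : ((Finset.Icc 1 X).filter fun n => q ^ a ∣ n ^ 2 - 1) ⊆
      ((Finset.Icc 1 X).filter fun n => q ^ a ∣ 2 * (n - 1 + 0)) ∪
      ((Finset.Icc 1 X).filter fun n => q ^ a ∣ 2 * (n - 1 + 2)) := by
    intro n hn
    simp only [Finset.mem_filter, Finset.mem_union] at hn ⊢
    have h1 : 1 ≤ n := (Finset.mem_Icc.1 hn.1).1
    obtain ⟨A, rfl⟩ := Nat.exists_eq_add_of_le' h1
    have h2 : (A + 1) ^ 2 - 1 = A * (A + 2) := by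
      rw [show (A + 1) ^ 2 = A * (A + 2) + 1 by ring]; simp
    rw [h2] at hn
    rcases primePow_dvd_two_mul hq hn.2 with h | h
    · exact Or.inl ⟨hn.1, by simpa using h⟩
    · exact Or.inr ⟨hn.1, by simpa using h⟩
  rcases Nat.eq_zero_or_pos X with rfl | hX
  · simp; positivity
  have h := (Finset.card_le_card hsub).trans (Finset.card_union_le _ _)
  have h0 := card_progression_le X (q ^ a) 0
  have h2 := card_progression_le X (q ^ a) 2
  have e0 : ((2 * (X - 1 + 0) / q ^ a : ℕ) : ℝ) ≤ 2 * (X + 1) / (q ^ a : ℕ) := by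
    refine Nat.cast_div_le.trans ?_
    gcongr
    exact_mod_cast (by omega : 2 * (X - 1 + 0) ≤ 2 * (X + 1))
  have e2 : ((2 * (X - 1 + 2) / q ^ a : ℕ) : ℝ) ≤ 2 * (X + 1) / (q ^ a : ℕ) := by
    refine Nat.cast_div_le.trans ?_
    gcongr
    exact_mod_cast (by omega : 2 * (X - 1 + 2) ≤ 2 * (X + 1))
  have h3 := h.trans (Nat.add_le_add h0 h2)
  have h4 : (((Finset.Icc 1 X).filter fun n => q ^ a ∣ n ^ 2 - 1).card : ℝ) ≤
     ((2 * (X - 1 + 0) / q ^ a : ℕ) : ℝ) + 1 + (((2 * (X - 1 + 2) / q ^ a : ℕ) : ℝ) + 1) := by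
    exact_mod_cast h3
  have h5 : (4 * (X + 1) / (q ^ a : ℕ) : ℝ) = 2 * (X + 1) / (q ^ a : ℕ) + 2 * (X + 1) / (q ^ a : ℕ) := by ring
  linarith

/-- The geometric mean of the bounds `z` and `q ^ 2` for the least power of `q` exceeding `z`. -/
theorem sqrt_mul_le_modulus {q z : ℕ} (hq : 2 ≤ q) (hqz : q ≤ z) :
    √(z : ℝ) * q ≤ (q ^ (Nat.log q z + 1) : ℕ) := by
  have h1 : z ≤ q ^ (Nat.log q z + 1) := (Nat.lt_pow_succ_log_self (by omega) z).le
  have h2 : q ^ 2 ≤ q ^ (Nat.log q z + 1) := by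
    apply Nat.pow_le_pow_right (by omega)
    have : 1 ≤ Nat.log q z := Nat.log_pos (by omega) hqz
    omega
  refine (sq_le_sq₀ (by positivity) (by positivity)).1 ?_
  rw [mul_pow, Real.sq_sqrt (by positivity), sq ((q ^ _ : ℕ) : ℝ)]
  exact_mod_cast Nat.mul_le_mul h1 h2

/-- The primes `z < p ≤ z ^ v` with `p ^ 2 - 1 ∣ M_z`. -/
noncomputable def goodPrimes (v : ℝ) (z : ℕ) : Finset ℕ :=
  (Finset.Icc 1 ⌊(z : ℝ) ^ v⌋₊).filter fun p => p.Prime ∧ z < p ∧ p ^ 2 - 1 ∣ Mlcm z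

/-- A prime `p ≤ z ^ v` with `p ^ 2 - 1` smooth is good, or at most `z`, or `p ^ 2 - 1` is divisible
by one of the moduli of `exists_modulus_dvd`; the number of the latter is bounded by a union bound
over `q ≤ z` and a harmonic sum. -/
theorem smoothPrimeCount_le (v : ℝ) (hv : 1 < v) (z : ℕ) (hz : 1 ≤ z) :
    (smoothPrimeCount ((z : ℝ) ^ v) z : ℝ) ≤
      (goodPrimes v z).card + 8 * (z : ℝ) ^ v * (1 + Real.log z) / √(z : ℝ) + 3 * z := by
  classical
  set X := ⌊(z : ℝ) ^ v⌋₊ with hX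
  have hsub : ((Finset.Icc 1 X).filter fun p : ℕ =>
      p.Prime ∧ ∀ q : ℕ, q.Prime → q ∣ p ^ 2 - 1 → (q : ℝ) ≤ z) ⊆
      (goodPrimes v z ∪ Finset.Icc 1 z) ∪
      ((Finset.Icc 1 z).filter Nat.Prime).biUnion fun q =>
        (Finset.Icc 1 X).filter fun n => q ^ (Nat.log q z + 1) ∣ n ^ 2 - 1 := by
    intro p hp
    simp only [Finset.mem_filter, goodPrimes, Finset.mem_union, Finset.mem_biUnion] at hp ⊢
    obtain ⟨hpX, hpp, hsm⟩ := hp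
    by_cases hpz : p ≤ z
    · exact Or.inl (Or.inr (Finset.mem_Icc.2 ⟨hpp.one_lt.le, hpz⟩))
    by_cases hM : p ^ 2 - 1 ∣ Mlcm z
    · exact Or.inl (Or.inl ⟨hpX, hpp, by omega, hM⟩)
    obtain ⟨q, hq, hqp, hd⟩ :=
      exists_modulus_dvd (fun q hq hd => by exact_mod_cast hsm q hq hd) hM
    exact Or.inr ⟨q, ⟨hq, hqp⟩, hpX, hd⟩
  have hXle : (X : ℝ) ≤ (z : ℝ) ^ v := Nat.floor_le (by positivity)
  have hz1 : (1 : ℝ) ≤ z := by exact_mod_cast hz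
  have hzv : (1 : ℝ) ≤ (z : ℝ) ^ v := Real.one_le_rpow hz1 (by linarith)
  have hs : 0 < √(z : ℝ) := Real.sqrt_pos.2 (by linarith)
  have hbad : ((((Finset.Icc 1 z).filter Nat.Prime).biUnion fun q =>
        (Finset.Icc 1 X).filter fun n => q ^ (Nat.log q z + 1) ∣ n ^ 2 - 1).card : ℝ) ≤
      8 * (z : ℝ) ^ v * (1 + Real.log z) / √(z : ℝ) + 2 * z := by
    calc _ ≤ ∑ q ∈ (Finset.Icc 1 z).filter Nat.Prime,
        (((Finset.Icc 1 X).filter fun n => q ^ (Nat.log q z + 1) ∣ n ^ 2 - 1).card : ℝ) := by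
          exact_mod_cast Finset.card_biUnion_le
      _ ≤ ∑ q ∈ (Finset.Icc 1 z).filter Nat.Prime,
            (8 * (z : ℝ) ^ v / √(z : ℝ) * (q : ℝ)⁻¹ + 2) := by
          refine Finset.sum_le_sum fun q hq => ?_
          rw [Finset.mem_filter, Finset.mem_Icc] at hq
          refine (card_bad_le X q _ hq.2).trans ?_
          have hq0 : (0 : ℝ) < q := by exact_mod_cast hq.2.pos
          have := sqrt_mul_le_modulus hq.2.two_le hq.1.2
          have e : 8 * (z : ℝ) ^ v / √(z : ℝ) * (q : ℝ)⁻¹ = 8 * (z : ℝ) ^ v / (√(z : ℝ) * q) := by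
            field_simp
          rw [e]
          have hX4 : 4 * ((X : ℝ) + 1) ≤ 8 * (z : ℝ) ^ v := by linarith
          gcongr
      _ ≤ ∑ q ∈ Finset.Icc 1 z, (8 * (z : ℝ) ^ v / √(z : ℝ) * (q : ℝ)⁻¹ + 2) :=
          Finset.sum_le_sum_of_subset_of_nonneg (Finset.filter_subset _ _)
            fun _ _ _ => by positivity
      _ = 8 * (z : ℝ) ^ v / √(z : ℝ) * (harmonic z : ℝ) + 2 * z := by
          rw [Finset.sum_add_distrib, ← Finset.mul_sum, harmonic_eq_sum_Icc]
          simp; ring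
      _ ≤ 8 * (z : ℝ) ^ v / √(z : ℝ) * (1 + Real.log z) + 2 * z := by
          gcongr
          exact harmonic_le_one_add_log z
      _ = _ := by ring
  have h1 := (Finset.card_le_card hsub).trans ((Finset.card_union_le _ _).trans
    (Nat.add_le_add_right (Finset.card_union_le _ _) _))
  rw [Nat.card_Icc, Nat.add_sub_cancel] at h1
  have h2 : (smoothPrimeCount ((z : ℝ) ^ v) z : ℝ) ≤ (goodPrimes v z).card + z +
    ((((Finset.Icc 1 z).filter Nat.Prime).biUnion fun q =>
        (Finset.Icc 1 X).filter fun n => q ^ (Nat.log q z + 1) ∣ n ^ 2 - 1).card : ℝ) := by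
    refine le_trans ?_ (Nat.cast_le.2 h1 |>.trans (by push_cast; rfl))
    rw [Nat.cast_le, smoothPrimeCount]
  linarith

open Filter Topology in
/-- The excluded primes number at most `11 * z ^ (v - δ)` for large `z`, against the at least
`z ^ (v - δ / 2)` primes supplied by the hypothesis. -/
theorem goodPrimes_card_ge (v : ℝ) (hv : 1 < v)
    (H : ∀ ε : ℝ, 0 < ε → ∃ y₀ : ℝ, ∀ y : ℝ, y₀ ≤ y →
      y ^ (v - ε) ≤ (smoothPrimeCount (y ^ v) y : ℝ))
    (δ : ℝ) (hδ : 0 < δ) (hδ' : δ < 1 / 2) (hδv : δ < v - 1) :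
    ∀ᶠ z : ℕ in atTop, (z : ℝ) ^ (v - δ) ≤ (goodPrimes v z).card := by
  obtain ⟨y₀, hy₀⟩ := H (δ / 2) (by positivity)
  have hlog : ∀ᶠ z : ℝ in atTop, 1 + Real.log z ≤ z ^ (1 / 2 - δ) := by
    have h1 := (isLittleO_log_rpow_atTop (r := 1 / 2 - δ) (by linarith)).bound
      (c := 1 / 2) (by norm_num)
    have h2 := (tendsto_rpow_atTop (y := 1 / 2 - δ) (by linarith)).eventually_ge_atTop 2
    filter_upwards [h1, h2, eventually_ge_atTop 1] with z h1 h2 h3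
    rw [Real.norm_of_nonneg (Real.log_nonneg h3),
      Real.norm_of_nonneg (by positivity)] at h1
    linarith
  have hbig := (tendsto_rpow_atTop (y := δ / 2) (by linarith)).eventually_ge_atTop 12
  filter_upwards [tendsto_natCast_atTop_atTop.eventually hlog,
    tendsto_natCast_atTop_atTop.eventually hbig, eventually_ge_atTop 1,
    tendsto_natCast_atTop_atTop.eventually (eventually_ge_atTop y₀)] with z h1 h2 h3 h4
  have h5 := (hy₀ z h4).trans (smoothPrimeCount_le v hv z h3)
  have hz1 : (1 : ℝ) ≤ z := by exact_mod_cast h3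
  have hz0 : (0 : ℝ) < z := by linarith
  have e1 : (z : ℝ) ^ (v - δ / 2) = (z : ℝ) ^ (v - δ) * (z : ℝ) ^ (δ / 2) := by
    rw [← Real.rpow_add hz0]; congr 1; ring
  have e2 : 8 * (z : ℝ) ^ v * (1 + Real.log z) / √(z : ℝ) ≤ 8 * (z : ℝ) ^ (v - δ) := by
    have : (z : ℝ) ^ (v - δ) = (z : ℝ) ^ v * (z : ℝ) ^ (1 / 2 - δ) / √(z : ℝ) := by
      rw [Real.sqrt_eq_rpow, ← Real.rpow_add hz0, ← Real.rpow_sub hz0]; congr 1; ring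
    rw [this, mul_assoc, mul_div_assoc]
    gcongr
  have e3 : (z : ℝ) ≤ (z : ℝ) ^ (v - δ) := by
    simpa using Real.rpow_le_rpow_of_exponent_le hz1 (show (1 : ℝ) ≤ v - δ by linarith)
  have e4 : (z : ℝ) ^ (v - δ) * 12 ≤ (z : ℝ) ^ (v - δ) * (z : ℝ) ^ (δ / 2) := by gcongr
  rw [e1] at h5
  linarith

/-! ### Lucas special integers from products of good primes -/

/-- The bound `(n / k) ^ k ≤ n.choose k`, in a form suited to induction. -/
theorem pow_le_choose_of_mul_le {t : ℝ} (ht : 1 ≤ t) :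
    ∀ k n : ℕ, t * k ≤ n → t ^ k ≤ (n.choose k : ℝ)
  | 0, n, _ => by simp
  | k + 1, 0, h => by
      exfalso; push_cast at h
      have : (0 : ℝ) ≤ k := by positivity
      nlinarith
  | k + 1, n + 1, h => by
      have ih := pow_le_choose_of_mul_le ht k n (by push_cast at h; linarith)
      have e : ((n + 1 : ℕ) : ℝ) * n.choose k = (n + 1).choose (k + 1) * (k + 1 : ℕ) := by
        exact_mod_cast Nat.add_one_mul_choose_eq n k
      have hk : (0 : ℝ) < (k + 1 : ℕ) := by positivity
      refine le_of_mul_le_mul_right ?_ hk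
      rw [← e]
      calc t ^ (k + 1) * (k + 1 : ℕ) = (t * (k + 1 : ℕ)) * t ^ k := by ring
        _ ≤ _ := by gcongr

theorem Mlcm_pos (z : ℕ) : 0 < Mlcm z := by
  refine Nat.pos_of_ne_zero fun h => ?_
  rw [Mlcm, Finset.lcm_eq_zero_iff] at h
  simp at h

theorem Mlcm_le (z : ℕ) : Mlcm z ≤ z ^ z := by
  refine le_trans (Nat.le_of_dvd (Nat.factorial_pos z) ?_) (Nat.factorial_le_pow z)
  refine Finset.lcm_dvd fun m hm => ?_
  rw [Finset.mem_Icc] at hm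
  exact Nat.dvd_factorial hm.1 hm.2

theorem prime_dvd_prod_iff {S : Finset ℕ} (hS : ∀ p ∈ S, p.Prime) {p : ℕ} (hp : p.Prime) :
    p ∣ ∏ a ∈ S, a ↔ p ∈ S := by
  rw [Prime.dvd_finsetProd_iff hp.prime]
  constructor
  · rintro ⟨a, ha, h⟩
    rwa [(Nat.prime_dvd_prime_iff_eq hp (hS a ha)).1 h]
  · exact fun h => ⟨p, h, dvd_rfl⟩

theorem lucasSpecial_prod {v : ℝ} {z : ℕ} (hz : 3 ≤ z) {S : Finset ℕ} (hS : S ⊆ goodPrimes v z) :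
    LucasSpecial (2 * (∏ a ∈ S, a) * Mlcm z) := by
  have hg : ∀ p ∈ S, p.Prime ∧ z < p ∧ p ^ 2 - 1 ∣ Mlcm z :=
    fun p hp => (Finset.mem_filter.1 (hS hp)).2
  have hp : ∀ p ∈ S, p.Prime := fun p hp => (hg p hp).1
  refine ⟨z, ∏ a ∈ S, a, hz, Finset.prod_pos fun p h => (hp p h).pos, ?_, ?_, ?_, rfl⟩
  · refine Finset.squarefree_prod_of_pairwise_isCoprime ?_ fun p h => (hp p h).squarefree
    intro a ha b hb hab
    exact Nat.coprime_iff_isRelPrime.1 ((Nat.coprime_primes (hp a ha) (hp b hb)).2 hab)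
  · refine Nat.Coprime.prod_left fun p h => ?_
    rw [(hp p h).coprime_iff_not_dvd]
    intro hd
    have hf : p ∣ z.factorial := hd.trans (Finset.lcm_dvd fun m hm => by
      rw [Finset.mem_Icc] at hm
      exact Nat.dvd_factorial hm.1 hm.2)
    have := ((hp p h).dvd_factorial).1 hf
    have := (hg p h).2.1
    omega
  · intro p hpp hd
    exact (hg p ((prime_dvd_prod_iff hp hpp).1 hd)).2.2

theorem choose_le_specialCount {v : ℝ} {z k : ℕ} (hz : 3 ≤ z) {x : ℝ}
    (hx : 2 * ((z : ℝ) ^ v) ^ k * (z : ℝ) ^ z ≤ x) :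
    (goodPrimes v z).card.choose k ≤ specialCount x := by
  classical
  rw [← Finset.card_powersetCard, specialCount]
  refine Finset.card_le_card_of_injOn (fun S => 2 * (∏ a ∈ S, a) * Mlcm z) ?_ ?_
  · intro S hS
    obtain ⟨hS, hk⟩ := Finset.mem_powersetCard.1 (Finset.mem_coe.1 hS)
    have hsp := lucasSpecial_prod hz hS
    simp only [Finset.coe_filter, Finset.mem_Icc, Set.mem_ofPred_eq]
    have hpos : 0 < ∏ a ∈ S, a :=
      Finset.prod_pos fun p h => ((Finset.mem_filter.1 (hS h)).2.1).pos
    refine ⟨⟨Nat.mul_pos (by omega) (Mlcm_pos z), Nat.le_floor (le_trans ?_ hx)⟩, hsp⟩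
    push_cast
    gcongr
    · rw [← hk, ← Finset.prod_const]
      refine Finset.prod_le_prod (fun _ _ => by positivity) fun p h => ?_
      have := (Finset.mem_Icc.1 (Finset.mem_filter.1 (hS h)).1).2
      exact (Nat.le_floor_iff (by positivity)).1 this
    · exact_mod_cast Mlcm_le z
  · intro S hS T hT h
    have hp : ∀ S ∈ Finset.powersetCard k (goodPrimes v z), ∀ p ∈ S, p.Prime := fun S hS p h =>
      (Finset.mem_filter.1 ((Finset.mem_powersetCard.1 hS).1 h)).2.1
    have hS := hp S (Finset.mem_coe.1 hS)
    have hT := hp T (Finset.mem_coe.1 hT)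
    have h' : ∏ a ∈ S, a = ∏ a ∈ T, a := by
      have := Nat.eq_of_mul_eq_mul_right (Mlcm_pos z) h
      omega
    ext p
    by_cases hpp : p.Prime
    · rw [← prime_dvd_prod_iff hS hpp, h', prime_dvd_prod_iff hT hpp]
    · exact ⟨fun h => absurd (hS p h) hpp, fun h => absurd (hT p h) hpp⟩

/-! ### Choice of parameters -/

open Filter in
/-- The theorem in terms of `L = log x`. With `z = ⌈L ^ (1 - δ)⌉` and
`k = ⌊(1 - δ) L / (v log z)⌋`, products of `k` good primes yield integers at most
`2 * z ^ (v * k) * M_z ≤ exp L`, and there are at least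
`(z ^ (v - 1 - 3 * δ)) ^ k ≥ exp (L * (1 - 1 / v - 5 * δ))` of them. -/
theorem eventually_specialCount_exp_ge (v : ℝ) (hv : 1 < v)
    (H : ∀ ε : ℝ, 0 < ε → ∃ y₀ : ℝ, ∀ y : ℝ, y₀ ≤ y →
      y ^ (v - ε) ≤ (smoothPrimeCount (y ^ v) y : ℝ))
    (ε : ℝ) (hε : 0 < ε) :
    ∀ᶠ L : ℝ in atTop,
      Real.exp L ^ (1 - 1 / v - ε) ≤ (specialCount (Real.exp L) : ℝ) := by
  obtain ⟨δ, hδ, hδ2, hδv, hδε⟩ :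
      ∃ δ : ℝ, 0 < δ ∧ δ < 1 / 2 ∧ 3 * δ < v - 1 ∧ 5 * δ ≤ ε := by
    refine ⟨min (1 / 4) (min ((v - 1) / 4) (ε / 5)), ?_, ?_, ?_, ?_⟩
    · have : 0 < v - 1 := by linarith
      positivity
    · exact (min_le_left _ _).trans_lt (by norm_num)
    · have := (min_le_right (1 / 4) (min ((v - 1) / 4) (ε / 5))).trans (min_le_left _ _)
      linarith
    · have := (min_le_right (1 / 4) (min ((v - 1) / 4) (ε / 5))).trans (min_le_right _ _)
      linarith
  have hv0 : 0 < v := by linarith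
  have hzt : Tendsto (fun L : ℝ => ⌈L ^ (1 - δ)⌉₊) atTop atTop :=
    tendsto_nat_ceil_atTop.comp (tendsto_rpow_atTop (by linarith))
  have hlogδ := (isLittleO_log_rpow_atTop hδ).bound (c := δ / 4) (by positivity)
  have hlog1 := (Real.isLittleO_log_id_atTop).bound (c := δ / v) (by positivity)
  filter_upwards [hzt.eventually (goodPrimes_card_ge v hv H δ hδ hδ2 (by linarith)),
    hzt.eventually (eventually_ge_atTop 3), hlogδ, hlog1, eventually_ge_atTop 1,
    eventually_ge_atTop (2 / δ * Real.log 2),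
    (tendsto_rpow_atTop hδ).eventually_ge_atTop 2] with L hN hz3 hl1 hl2 hL1 hL2 hLδ
  have hL0 : 0 < L := by linarith
  set z := ⌈L ^ (1 - δ)⌉₊ with hz
  have hz3' : (3 : ℝ) ≤ z := by exact_mod_cast hz3
  have hz0 : (0 : ℝ) < z := by linarith
  have hlogz1 : 1 ≤ Real.log z := by
    rw [Real.le_log_iff_exp_le hz0]
    exact (Real.exp_one_lt_d9.le.trans (by norm_num)).trans hz3'
  rw [Real.norm_of_nonneg (Real.log_nonneg hL1), Real.norm_of_nonneg (by positivity)] at hl1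
  rw [Real.norm_of_nonneg (Real.log_nonneg hL1), id, Real.norm_of_nonneg hL0.le] at hl2
  have hprod : L ^ (1 - δ) * L ^ δ = L := by
    rw [← Real.rpow_add hL0]; simp
  have hA1 : 1 ≤ L ^ (1 - δ) := Real.one_le_rpow hL1 (by linarith)
  have hz2 : (z : ℝ) ≤ 2 * L ^ (1 - δ) := by
    have := (Nat.ceil_lt_add_one (show 0 ≤ L ^ (1 - δ) by positivity)).le
    linarith
  have hzL : (z : ℝ) ≤ L := by nlinarith
  have hlogzL : Real.log z ≤ Real.log L := Real.log_le_log hz0 hzL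
  -- as `M_z ≤ z ^ z`, this bounds `M_z` by the power `exp L ^ (δ / 2)`
  have hzlogz : z * Real.log z ≤ δ / 2 * L := by
    calc z * Real.log z ≤ (2 * L ^ (1 - δ)) * (δ / 4 * L ^ δ) := by
          gcongr
          exact hlogzL.trans hl1
      _ = δ / 2 * (L ^ (1 - δ) * L ^ δ) := by ring
      _ = _ := by rw [hprod]
  have hlog2 : Real.log 2 ≤ δ / 2 * L := by
    calc Real.log 2 = δ / 2 * (2 / δ * Real.log 2) := by field_simp
      _ ≤ _ := by gcongr
  have hLz : L ≤ (z : ℝ) ^ (1 + 2 * δ) := by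
    have h1 : 1 ≤ (1 - δ) * (1 + 2 * δ) := by nlinarith
    calc L = L ^ (1 : ℝ) := by simp
      _ ≤ L ^ ((1 - δ) * (1 + 2 * δ)) := Real.rpow_le_rpow_of_exponent_le hL1 h1
      _ = (L ^ (1 - δ)) ^ (1 + 2 * δ) := Real.rpow_mul hL0.le _ _
      _ ≤ _ := by
        gcongr
        exact Nat.le_ceil _
  set w := (1 - δ) * L / (v * Real.log z) with hw
  have hw0 : 0 ≤ w := by
    have : 0 < 1 - δ := by linarith
    positivity
  set k := ⌊w⌋₊ with hk
  have hkw : (k : ℝ) ≤ w := Nat.floor_le hw0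
  have hwk : w ≤ k + 1 := (Nat.lt_floor_add_one w).le
  have hwv : w * (v * Real.log z) = (1 - δ) * L := by
    rw [hw]; field_simp
  have hkL : (k : ℝ) ≤ L := by
    have : 1 ≤ v * Real.log z := by nlinarith
    nlinarith
  have hx : 2 * ((z : ℝ) ^ v) ^ k * (z : ℝ) ^ z ≤ Real.exp L := by
    rw [← Real.log_le_iff_le_exp (by positivity), Real.log_mul (by positivity) (by positivity),
      Real.log_mul (by positivity) (by positivity), Real.log_pow, Real.log_pow,
      Real.log_rpow hz0]
    have : k * (v * Real.log z) ≤ w * (v * Real.log z) := by gcongr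
    linarith
  have ht1 : 1 ≤ (z : ℝ) ^ (v - 1 - 3 * δ) := Real.one_le_rpow (by linarith) (by linarith)
  have htk : (z : ℝ) ^ (v - 1 - 3 * δ) * k ≤ (goodPrimes v z).card := by
    calc (z : ℝ) ^ (v - 1 - 3 * δ) * k ≤ (z : ℝ) ^ (v - 1 - 3 * δ) * (z : ℝ) ^ (1 + 2 * δ) := by
          gcongr
          exact hkL.trans hLz
      _ = (z : ℝ) ^ (v - δ) := by rw [← Real.rpow_add hz0]; congr 1; ring
      _ ≤ _ := hN
  have hch := pow_le_choose_of_mul_le ht1 _ _ htk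
  have hcount : ((goodPrimes v z).card.choose k : ℝ) ≤ specialCount (Real.exp L) := by
    exact_mod_cast choose_le_specialCount hz3 hx
  refine le_trans ?_ (hch.trans hcount)
  rw [← Real.exp_mul, ← Real.le_log_iff_exp_le (by positivity), Real.log_pow, Real.log_rpow hz0]
  have hklog : (1 - 2 * δ) * L / v ≤ k * Real.log z := by
    have h1 : (w - 1) * Real.log z ≤ k * Real.log z := by gcongr; linarith
    have h2 : w * Real.log z = (1 - δ) * L / v := by rw [hw]; field_simp
    have h3 : (1 - 2 * δ) * L / v = (1 - δ) * L / v - δ / v * L := by ring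
    linarith
  calc L * (1 - 1 / v - ε) ≤ ((1 - 2 * δ) * L / v) * (v - 1 - 3 * δ) := by
        have hu : 0 < 1 / v := by positivity
        have hu1 : 1 / v < 1 := by rw [div_lt_one hv0]; exact hv
        have e : ((1 - 2 * δ) * L / v) * (v - 1 - 3 * δ) =
            L * ((1 - 2 * δ) * (1 - 1 / v - 3 * δ * (1 / v))) := by field_simp
        rw [e]
        gcongr
        nlinarith [mul_pos hδ hu, mul_pos (mul_pos hδ hδ) hu]
    _ ≤ (k * Real.log z) * (v - 1 - 3 * δ) := by
        gcongr
    _ = _ := by ring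

theorem statement3 (v : ℝ) (hv : 1 < v)
    (H : ∀ ε : ℝ, 0 < ε → ∃ y₀ : ℝ, ∀ y : ℝ, y₀ ≤ y →
      y ^ (v - ε) ≤ (smoothPrimeCount (y ^ v) y : ℝ)) :
    ∀ ε : ℝ, 0 < ε → ∃ x₀ : ℝ, ∀ x : ℝ, x₀ ≤ x →
      x ^ (1 - 1 / v - ε) ≤ (specialCount x : ℝ) := by
  intro ε hε
  obtain ⟨x₀, hx₀⟩ := Filter.eventually_atTop.1
    ((Real.tendsto_log_atTop.eventually (eventually_specialCount_exp_ge v hv H ε hε)).and (Filter.eventually_gt_atTop 0))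
  refine ⟨x₀, fun x hx => ?_⟩
  obtain ⟨h, h0⟩ := hx₀ x hx
  rwa [Real.exp_log h0] at h
end
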